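/- arXiv:1008.4908 — 2 statements merged into one kernel-verified Lean document; each statement's English description precedes it below -/
import Mathlib

section
/- Let D be an infinite field and let k ≥ 1 and n ≥ 1 satisfy n ≥ 2k − 1. Then the relative integral group homology H_k(SL_{n+1}(D), SL_n(D); Z) vanishes; equivalently, the map H_k(SL_n(D); Z) → H_k(SL_{n+1}(D); Z) induced by the block embedding A ↦ diag(A, 1) is surjective, and the induced map H_{k−1}(SL_n(D); Z) → H_{k−1}(SL_{n+1}(D); Z) is injective. -/
namespace Stmt0

open Finsupp in
/-- The `n`-th differential of the (inhomogeneous) bar complex computing the homology of the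
group `G` with trivial coefficients in the commutative ring `R`.  The module of `n`-chains is
the free `R`-module on `n`-tuples of elements of `G`, and on a basis element
`(g₁, …, g_{n+1})` the differential is
`(g₂,…,g_{n+1}) + ∑ᵢ (-1)ⁱ (g₁,…,gᵢgᵢ₊₁,…,g_{n+1}) + (-1)^{n+1} (g₁,…,g_n)`. -/
noncomputable def barDiff (R : Type) [CommRing R] (G : Type*) [Group G] (n : ℕ) :
    ((Fin (n + 1) → G) →₀ R) →ₗ[R] ((Fin n → G) →₀ R) :=
  Finsupp.lift ((Fin n → G) →₀ R) R (Fin (n + 1) → G) fun c =>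
    Finsupp.single (fun j : Fin n => c j.succ) (1 : R)
      + ∑ i : Fin n, Finsupp.single
          (fun j : Fin n => if (j : ℕ) < (i : ℕ) then c (Fin.castSucc j)
            else if (j : ℕ) = (i : ℕ) then c (Fin.castSucc i) * c i.succ
            else c j.succ) ((-1 : R) ^ ((i : ℕ) + 1))
      + Finsupp.single (fun j : Fin n => c (Fin.castSucc j)) ((-1 : R) ^ (n + 1))

/-- The submodule of `k`-cycles of the bar complex of `G` (with trivial coefficients `R`). -/
noncomputable def barCycles (R : Type) [CommRing R] (G : Type*) [Group G] :
    (k : ℕ) → Submodule R ((Fin k → G) →₀ R)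
  | 0 => ⊤
  | (k + 1) => LinearMap.ker (barDiff R G k)

/-- The submodule of `k`-boundaries of the bar complex of `G`. -/
noncomputable def barBoundaries (R : Type) [CommRing R] (G : Type*) [Group G] (k : ℕ) :
    Submodule R ((Fin k → G) →₀ R) :=
  LinearMap.range (barDiff R G k)

/-- Group homology `H_k(G; R)` with trivial coefficients, defined via the bar complex as the
image of the `k`-cycles in the quotient of the `k`-chains by the `k`-boundaries
(i.e. as `Z_k / B_k`). -/
noncomputable def barHomology (R : Type) [CommRing R] (G : Type*) [Group G] (k : ℕ) :=
  ↥(Submodule.map (barBoundaries R G k).mkQ (barCycles R G k))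

noncomputable instance (R : Type) [CommRing R] (G : Type*) [Group G] (k : ℕ) :
    AddCommGroup (barHomology R G k) :=
  inferInstanceAs (AddCommGroup ↥(Submodule.map (barBoundaries R G k).mkQ (barCycles R G k)))

noncomputable instance (R : Type) [CommRing R] (G : Type*) [Group G] (k : ℕ) :
    Module R (barHomology R G k) :=
  inferInstanceAs (Module R ↥(Submodule.map (barBoundaries R G k).mkQ (barCycles R G k)))

/-- The map induced on bar chains by a map `φ : G' → G` of groups; for a group homomorphism
`φ` this is the usual chain map inducing `H_k(φ) : H_k(G'; R) → H_k(G; R)`. -/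
noncomputable def barMap (R : Type) [CommRing R] {G' G : Type*} [Group G'] [Group G]
    (φ : G' → G) (k : ℕ) : ((Fin k → G') →₀ R) →ₗ[R] ((Fin k → G) →₀ R) :=
  Finsupp.lmapDomain R R fun c => φ ∘ c

/-- The statement that the map `H_k(G'; R) → H_k(G; R)` induced by `φ : G' → G` is
surjective, expressed at the chain level of the bar complexes:  every `k`-cycle of `G` differs
from the image of a `k`-cycle of `G'` by a `k`-boundary. -/
def BarInducedSurj (R : Type) [CommRing R] {G' G : Type*} [Group G'] [Group G]
    (φ : G' → G) (k : ℕ) : Prop :=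
  ∀ z ∈ barCycles R G k, ∃ w ∈ barCycles R G' k,
    z - barMap R φ k w ∈ barBoundaries R G k

/-- The statement that the map `H_k(G'; R) → H_k(G; R)` induced by `φ : G' → G` is
injective, expressed at the chain level of the bar complexes:  a `k`-cycle of `G'` whose image
is a `k`-boundary of `G` is already a `k`-boundary of `G'`. -/
def BarInducedInj (R : Type) [CommRing R] {G' G : Type*} [Group G'] [Group G]
    (φ : G' → G) (k : ℕ) : Prop :=
  ∀ w ∈ barCycles R G' k,
    barMap R φ k w ∈ barBoundaries R G k → w ∈ barBoundaries R G' k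

/-- The block embedding `SL_n(D) → SL_{n+1}(D)`, `A ↦ diag(A, 1)`, sending a matrix `A` to
the block-diagonal matrix with blocks `A` and `1`. -/
noncomputable def slEmb (D : Type) [Field D] (n : ℕ) :
    Matrix.SpecialLinearGroup (Fin n) D → Matrix.SpecialLinearGroup (Fin (n + 1)) D :=
  fun A =>
    ⟨(Matrix.fromBlocks (A : Matrix (Fin n) (Fin n) D) 0 0
        (1 : Matrix (Fin 1) (Fin 1) D)).submatrix finSumFinEquiv.symm finSumFinEquiv.symm, by
      rw [Matrix.det_submatrix_equiv_self, Matrix.det_fromBlocks_zero₂₁]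
      simp [A.2]⟩

section Part1

open Finsupp

section ListChains
variable {α β : Type}

/-- Free abelian group on lists. -/
abbrev KK (α : Type) := List α →₀ ℤ

noncomputable def consL (a : α) : KK α →ₗ[ℤ] KK α := Finsupp.lmapDomain ℤ ℤ (List.cons a)

noncomputable def mapL (f : α → β) : KK α →ₗ[ℤ] KK β := Finsupp.lmapDomain ℤ ℤ (List.map f)

noncomputable def bd0 : List α → KK α
  | [] => 0
  | a :: l => single l 1 - consL a (bd0 l)

/-- simplicial boundary (augmented), on lists -/
noncomputable def bd : KK α →ₗ[ℤ] KK α := Finsupp.linearCombination ℤ bd0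

@[simp] lemma consL_single (a : α) (l : List α) (n : ℤ) :
    consL a (single l n) = single (a :: l) n := by simp [consL]

@[simp] lemma mapL_single (f : α → β) (l : List α) (n : ℤ) :
    mapL f (single l n) = single (l.map f) n := by simp [mapL]

lemma bd_single (l : List α) : bd (single l 1) = bd0 l := by simp [bd]

lemma bd_consL (a : α) (c : KK α) : bd (consL a c) = c - consL a (bd c) := by
  have : bd ∘ₗ consL a = LinearMap.id - consL a ∘ₗ bd := by
    ext1 l; ext1
    simp [bd_single, bd0]
  exact LinearMap.congr_fun this c

lemma bd_bd (c : KK α) : bd (bd c) = 0 := by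
  have : (bd : KK α →ₗ[ℤ] KK α) ∘ₗ bd = 0 := by
    ext1 l; ext1
    simp only [LinearMap.comp_apply, lsingle_apply, LinearMap.zero_apply]
    induction l with
    | nil => simp [bd_single, bd0]
    | cons a l ih =>
      rw [← consL_single, bd_consL, map_sub, bd_consL, ih]; simp
  exact LinearMap.congr_fun this c

lemma mapL_consL (f : α → β) (a : α) (c : KK α) :
    mapL f (consL a c) = consL (f a) (mapL f c) := by
  have : mapL f ∘ₗ consL a = consL (f a) ∘ₗ mapL f := by
    ext1 l; ext1; simp [Function.comp_def]
  exact LinearMap.congr_fun this c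

lemma bd_mapL (f : α → β) (c : KK α) : bd (mapL f c) = mapL f (bd c) := by
  have : bd ∘ₗ mapL f = mapL f ∘ₗ bd := by
    ext1 l; ext1
    simp only [LinearMap.comp_apply, lsingle_apply]
    induction l with
    | nil => simp [bd_single, bd0]
    | cons a l ih =>
      rw [← consL_single, mapL_consL, bd_consL, bd_consL, ih, map_sub, mapL_consL]
  exact LinearMap.congr_fun this c

lemma mapL_mapL {γ : Type} (g : β → γ) (f : α → β) (c : KK α) :
    mapL g (mapL f c) = mapL (fun a => g (f a)) c := by
  have : mapL g ∘ₗ mapL f = mapL (fun a => g (f a)) := by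
    ext1 l; ext1; simp [Function.comp_def]
  exact LinearMap.congr_fun this c

noncomputable def prism0 (f : α → α) : List α → KK α
  | [] => 0
  | a :: l => single (a :: f a :: l.map f) 1 - consL a (prism0 f l)

noncomputable def prism (f : α → α) : KK α →ₗ[ℤ] KK α := Finsupp.linearCombination ℤ (prism0 f)

lemma prism_single (f : α → α) (l : List α) : prism f (single l 1) = prism0 f l := by simp [prism]

lemma prism_consL (f : α → α) (a : α) (c : KK α) :
    prism f (consL a c) = consL a (consL (f a) (mapL f c)) - consL a (prism f c) := by
  have : prism f ∘ₗ consL a =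
      consL a ∘ₗ consL (f a) ∘ₗ mapL f - consL a ∘ₗ prism f := by
    ext1 l; ext1
    simp [prism_single, prism0]
  exact LinearMap.congr_fun this c

lemma prism_formula (f : α → α) (c : KK α) :
    bd (prism f c) + prism f (bd c) = mapL f c - c := by
  have : bd ∘ₗ prism f + prism f ∘ₗ bd = mapL f - LinearMap.id := by
    ext1 l; ext1
    simp only [LinearMap.comp_apply, lsingle_apply, LinearMap.add_apply, LinearMap.sub_apply,
      LinearMap.id_apply]
    induction l with
    | nil => simp [prism_single, bd_single, bd0, prism0]
    | cons a l ih =>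
      have ih' := congrArg (consL a) ih
      simp only [map_add, map_sub] at ih'
      rw [← consL_single, prism_consL, mapL_consL, bd_consL, map_sub, map_sub, bd_consL, bd_consL,
        bd_consL, prism_consL, bd_mapL]
      simp only [map_sub]
      rw [← sub_eq_zero] at ih' ⊢
      rw [← ih']
      abel
  exact LinearMap.congr_fun this c

lemma mapL_prism (f : α → α) (f' : β → β) (r : α → β) (l : List α)
    (h : ∀ a, f' (r a) = r (f a)) :
    mapL r (prism0 f l) = prism0 f' (l.map r) := by
  induction l with
  | nil => simp [prism0]
  | cons a l ih =>
    simp only [prism0, map_sub, mapL_consL, ih, mapL_single, List.map_cons, h, List.map_map]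
    congr 3
    simp [Function.comp_def, h]

/-- chains on lists of length `j` with entries in `G` -/
noncomputable def LL (G : Set α) (j : ℕ) : Submodule ℤ (KK α) :=
  Submodule.span ℤ {c | ∃ l : List α, l.length = j ∧ (∀ a ∈ l, a ∈ G) ∧ c = single l 1}

lemma single_mem_LL {G : Set α} {l : List α} {j : ℕ} (h : l.length = j) (h2 : ∀ a ∈ l, a ∈ G) :
    single l 1 ∈ LL G j := Submodule.subset_span ⟨l, h, h2, rfl⟩

lemma map_LL_le {M : Type} [AddCommGroup M] {G : Set α} {j : ℕ} {N : Submodule ℤ M}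
    (f : KK α →ₗ[ℤ] M)
    (h : ∀ l : List α, l.length = j → (∀ a ∈ l, a ∈ G) → f (single l 1) ∈ N)
    {c : KK α} (hc : c ∈ LL G j) : f c ∈ N := by
  have : LL G j ≤ N.comap f := by
    refine Submodule.span_le.2 ?_
    rintro _ ⟨l, h1, h2, rfl⟩
    exact h l h1 h2
  exact this hc

lemma consL_mem {G : Set α} {j : ℕ} {a : α} (ha : a ∈ G) {c : KK α} (hc : c ∈ LL G j) :
    consL a c ∈ LL G (j + 1) := by
  refine map_LL_le (consL a) ?_ hc
  intro l h1 h2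
  rw [consL_single]
  exact single_mem_LL (by simp [h1]) (by simpa [ha] using h2)

lemma mapL_mem {G : Set α} {G' : Set β} {j : ℕ} {f : α → β} (hf : ∀ a ∈ G, f a ∈ G')
    {c : KK α} (hc : c ∈ LL G j) : mapL f c ∈ LL G' j := by
  refine map_LL_le (mapL f) ?_ hc
  intro l h1 h2
  rw [mapL_single]
  exact single_mem_LL (by simp [h1]) (by simpa using fun a ha => hf a (h2 a ha))

lemma bd0_mem {G : Set α} (l : List α) (j : ℕ) (h1 : l.length = j + 1) (h2 : ∀ a ∈ l, a ∈ G) :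
    bd0 l ∈ LL G j := by
  induction l generalizing j with
  | nil => simp at h1
  | cons a l ih =>
    simp only [List.mem_cons, forall_eq_or_imp] at h2
    have h1' : l.length = j := by simpa using h1
    refine Submodule.sub_mem _ (single_mem_LL h1' h2.2) ?_
    cases j with
    | zero =>
      have : l = [] := List.length_eq_zero_iff.1 h1'
      subst this
      simp [bd0]
    | succ j => exact consL_mem h2.1 (ih j h1' h2.2)

lemma bd_mem {G : Set α} {j : ℕ} {c : KK α} (hc : c ∈ LL G (j + 1)) : bd c ∈ LL G j :=
  map_LL_le bd (fun l h1 h2 => by rw [bd_single]; exact bd0_mem l j h1 h2) hc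

lemma prism0_mem {G : Set α} (f : α → α) (hf : ∀ a ∈ G, f a ∈ G) (l : List α) (j : ℕ)
    (h1 : l.length = j) (h2 : ∀ a ∈ l, a ∈ G) :
    prism0 f l ∈ LL G (j + 1) := by
  induction l generalizing j with
  | nil => simp [prism0]
  | cons a l ih =>
    simp only [List.mem_cons, forall_eq_or_imp] at h2
    subst h1
    refine Submodule.sub_mem _ (single_mem_LL (by simp) ?_) (consL_mem h2.1 (ih _ rfl h2.2))
    simp only [List.mem_cons, forall_eq_or_imp, List.mem_map, forall_exists_index, and_imp]
    refine ⟨h2.1, hf a h2.1, ?_⟩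
    rintro _ b hb rfl
    exact hf b (h2.2 b hb)

lemma LL_mono {G G' : Set α} (h : G ⊆ G') (j : ℕ) : LL G j ≤ LL G' j := by
  refine Submodule.span_mono ?_
  rintro _ ⟨l, h1, h2, rfl⟩
  exact ⟨l, h1, fun a ha => h (h2 a ha), rfl⟩

end ListChains

section Bicomplex
variable {C : Type} [AddCommGroup C] (dG dX : C →ₗ[ℤ] C)
  (A U : ℕ → ℕ → Submodule ℤ C)

lemma bicomplex_claim (k : ℕ)
    (hcomm : ∀ c, dX (dG c) = dG (dX c)) (hGG : ∀ c, dG (dG c) = 0) (hXX : ∀ c, dX (dX c) = 0)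
    (hAG : ∀ i j, ∀ c ∈ A i (j + 1), dG c ∈ A i j)
    (hUG : ∀ i j, ∀ c ∈ U i (j + 1), dG c ∈ U i j)
    (hUX : ∀ i j, ∀ c ∈ U (i + 1) j, dX c ∈ U i j)
    (hA0 : ∀ i, A i 0 ≤ U i 0)
    (hEx : ∀ i j, i + j + 1 = k → ∀ x ∈ A (i + 1) (j + 1), dX x ∈ U i (j + 1) →
      ∃ y ∈ A (i + 2) (j + 1), x - dX y ∈ U (i + 1) (j + 1))
    (hVan : ∀ i j, i + j + 1 = k → ∀ x ∈ A (i + 2) (j + 1), dG x ∈ U (i + 2) j →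
      ∃ y ∈ A (i + 2) (j + 2), x - dG y ∈ U (i + 2) (j + 1))
    (hAX : ∀ i j, ∀ c ∈ A (i + 1) j, dX c ∈ A i j)
    (j : ℕ) : ∀ i, i + j = k → ∀ x ∈ A (i + 1) (j + 1), dX (dG x) ∈ U i j →
      ∃ y ∈ A (i + 2) (j + 1), dG (x - dX y) ∈ U (i + 1) j := by
  induction j with
  | zero =>
    intro i _ x hx _
    refine ⟨0, Submodule.zero_mem _, ?_⟩
    rw [map_zero, sub_zero]
    exact hA0 _ (hAG _ _ _ hx)
  | succ j ih =>
    intro i hi x hx hdx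
    obtain ⟨u, hu, hu2⟩ := hEx i j (by omega) (dG x) (hAG _ _ _ hx) hdx
    have h1 : dX (dG u) ∈ U (i + 1) j := by
      have := hUG _ _ _ hu2
      rw [map_sub, hGG, zero_sub, ← hcomm] at this
      simpa using (Submodule.neg_mem _ this)
    obtain ⟨v, hv, hv2⟩ := ih (i + 1) (by omega) u hu h1
    obtain ⟨y, hy, hy2⟩ := hVan i j (by omega) (u - dX v)
      (Submodule.sub_mem _ hu (hAX _ _ _ hv)) hv2
    refine ⟨y, hy, ?_⟩
    have h2 := Submodule.add_mem _ hu2 (hUX _ _ _ hy2)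
    convert h2 using 1
    simp only [map_sub, hXX, hcomm]
    abel

lemma bicomplex_main (k : ℕ)
    (hcomm : ∀ c, dX (dG c) = dG (dX c)) (hGG : ∀ c, dG (dG c) = 0) (hXX : ∀ c, dX (dX c) = 0)
    (hAG : ∀ i j, ∀ c ∈ A i (j + 1), dG c ∈ A i j)
    (hUG : ∀ i j, ∀ c ∈ U i (j + 1), dG c ∈ U i j)
    (hUX : ∀ i j, ∀ c ∈ U (i + 1) j, dX c ∈ U i j)
    (hA0 : ∀ i, A i 0 ≤ U i 0)
    (hEx0 : ∀ x ∈ A 0 (k + 1), ∃ y ∈ A 1 (k + 1), x - dX y ∈ U 0 (k + 1))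
    (hEx : ∀ i j, i + j + 1 = k → ∀ x ∈ A (i + 1) (j + 1), dX x ∈ U i (j + 1) →
      ∃ y ∈ A (i + 2) (j + 1), x - dX y ∈ U (i + 1) (j + 1))
    (hVan : ∀ i j, i + j + 1 = k → ∀ x ∈ A (i + 2) (j + 1), dG x ∈ U (i + 2) j →
      ∃ y ∈ A (i + 2) (j + 2), x - dG y ∈ U (i + 2) (j + 1))
    (hZ : ∀ x ∈ A 1 (k + 1), dG x ∈ U 1 k → ∃ w ∈ A 0 (k + 2), dX x - dG w ∈ U 0 (k + 1))
    (hAX : ∀ i j, ∀ c ∈ A (i + 1) j, dX c ∈ A i j) :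
    ∀ z ∈ A 0 (k + 1), dG z ∈ U 0 k → ∃ w ∈ A 0 (k + 2), z - dG w ∈ U 0 (k + 1) := by
  intro z hz hdz
  obtain ⟨x, hx, hx2⟩ := hEx0 z hz
  have h1 : dX (dG x) ∈ U 0 k := by
    have := Submodule.sub_mem _ hdz (hUG _ _ _ hx2)
    convert this using 1
    simp only [map_sub, hcomm]
    abel
  obtain ⟨y, hy, hy2⟩ := bicomplex_claim dG dX A U k hcomm hGG hXX hAG hUG hUX hA0 hEx hVan hAX
    k 0 (by omega) x hx h1
  obtain ⟨w, hw, hw2⟩ := hZ (x - dX y) (Submodule.sub_mem _ hx (hAX _ _ _ hy)) hy2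
  refine ⟨w, hw, ?_⟩
  have := Submodule.add_mem _ hx2 hw2
  convert this using 1
  simp only [map_sub, hXX]
  abel
end Bicomplex

end Part1

section Part2

open Finsupp

section Equivariant
set_option linter.unusedSectionVars false
variable {Γ Ω : Type} [Group Γ] [MulAction Γ Ω]

/-- left translation of list chains -/
noncomputable abbrev lt (g : Γ) : KK Γ →ₗ[ℤ] KK Γ := mapL (fun a => g * a)

/-- coinvariant relations (plus the empty list in degree `0`) -/
noncomputable def Co (G : Subgroup Γ) (j : ℕ) : Submodule ℤ (KK Γ) :=
  Submodule.span ℤ ({c | ∃ g ∈ G, ∃ l : List Γ, l.length = j ∧ (∀ a ∈ l, a ∈ (G : Set Γ)) ∧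
      c = lt g (single l 1) - single l 1} ∪ {c | j = 0 ∧ c = single [] 1})

noncomputable def UL (G G' : Subgroup Γ) (j : ℕ) : Submodule ℤ (KK Γ) :=
  Co G j ⊔ LL (G' : Set Γ) j

/-- vanishing of relative homology of a pair of subgroups -/
def RelVan (G G' : Subgroup Γ) (q : ℕ) : Prop :=
  ∀ x ∈ LL (G : Set Γ) (q + 1), bd x ∈ UL G G' q →
    ∃ y ∈ LL (G : Set Γ) (q + 2), x - bd y ∈ UL G G' (q + 1)

abbrev CC (Γ Ω : Type) := Ω →₀ KK Γ

noncomputable def dG : CC Γ Ω →ₗ[ℤ] CC Γ Ω := Finsupp.mapRange.linearMap bd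

@[simp] lemma dG_single (s : Ω) (c : KK Γ) : dG (single s c) = single s (bd c) := by
  simp [dG]

lemma dG_dG (c : CC Γ Ω) : dG (dG c) = 0 := by
  ext1 s
  simp [dG, bd_bd]

noncomputable def AA (G : Subgroup Γ) (S : Set Ω) (j : ℕ) : Submodule ℤ (CC Γ Ω) :=
  Submodule.span ℤ {c | ∃ s ∈ S, ∃ l : List Γ, l.length = j ∧ (∀ a ∈ l, a ∈ (G : Set Γ)) ∧
    c = single s (single l 1)}

noncomputable def UU (G G' : Subgroup Γ) (S S' : Set Ω) (j : ℕ) : Submodule ℤ (CC Γ Ω) :=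
  Submodule.span ℤ ({c | ∃ g ∈ G, ∃ s ∈ S, ∃ l : List Γ, l.length = j ∧
      (∀ a ∈ l, a ∈ (G : Set Γ)) ∧
      c = single (g • s) (lt g (single l 1)) - single s (single l 1)} ∪
    {c | ∃ s ∈ S', ∃ l : List Γ, l.length = j ∧ (∀ a ∈ l, a ∈ (G' : Set Γ)) ∧
      c = single s (single l 1)} ∪
    {c | ∃ s ∈ S, j = 0 ∧ c = single s (single [] 1)})

lemma map_AA_le {M : Type} [AddCommGroup M] {G : Subgroup Γ} {S : Set Ω} {j : ℕ}
    {N : Submodule ℤ M} (f : CC Γ Ω →ₗ[ℤ] M)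
    (h : ∀ s ∈ S, ∀ l : List Γ, l.length = j → (∀ a ∈ l, a ∈ (G : Set Γ)) →
      f (single s (single l 1)) ∈ N)
    {c : CC Γ Ω} (hc : c ∈ AA G S j) : f c ∈ N := by
  have : AA G S j ≤ N.comap f := by
    refine Submodule.span_le.2 ?_
    rintro _ ⟨s, hs, l, h1, h2, rfl⟩
    exact h s hs l h1 h2
  exact this hc

lemma map_UU_le {M : Type} [AddCommGroup M] {G G' : Subgroup Γ} {S S' : Set Ω} {j : ℕ}
    {N : Submodule ℤ M} (f : CC Γ Ω →ₗ[ℤ] M)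
    (h : ∀ g ∈ G, ∀ s ∈ S, ∀ l : List Γ, l.length = j → (∀ a ∈ l, a ∈ (G : Set Γ)) →
      f (single (g • s) (lt g (single l 1))) - f (single s (single l 1)) ∈ N)
    (h' : ∀ s ∈ S', ∀ l : List Γ, l.length = j → (∀ a ∈ l, a ∈ (G' : Set Γ)) →
      f (single s (single l 1)) ∈ N)
    (h'' : j = 0 → ∀ s ∈ S, f (single s (single [] 1)) ∈ N)
    {c : CC Γ Ω} (hc : c ∈ UU G G' S S' j) : f c ∈ N := by
  have : UU G G' S S' j ≤ N.comap f := by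
    refine Submodule.span_le.2 ?_
    rintro _ ((⟨g, hg, s, hs, l, h1, h2, rfl⟩ | ⟨s, hs, l, h1, h2, rfl⟩) | ⟨s, hs, h1, rfl⟩)
    · have := h g hg s hs l h1 h2
      rw [← map_sub] at this
      exact this
    · exact h' s hs l h1 h2
    · exact h'' h1 s hs
  exact this hc

lemma map_Co_le {M : Type} [AddCommGroup M] {G : Subgroup Γ} {j : ℕ}
    {N : Submodule ℤ M} (f : KK Γ →ₗ[ℤ] M)
    (h : ∀ g ∈ G, ∀ l : List Γ, l.length = j → (∀ a ∈ l, a ∈ (G : Set Γ)) →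
      f (lt g (single l 1)) - f (single l 1) ∈ N)
    (h'' : j = 0 → f (single [] 1) ∈ N)
    {c : KK Γ} (hc : c ∈ Co G j) : f c ∈ N := by
  have : Co G j ≤ N.comap f := by
    refine Submodule.span_le.2 ?_
    rintro _ (⟨g, hg, l, h1, h2, rfl⟩ | ⟨h1, rfl⟩)
    · have := h g hg l h1 h2
      rw [← map_sub] at this
      exact this
    · exact h'' h1
  exact this hc

lemma single_mem_AA {G : Subgroup Γ} {S : Set Ω} {j : ℕ} {s : Ω} (hs : s ∈ S) {c : KK Γ}
    (hc : c ∈ LL (G : Set Γ) j) : single s c ∈ AA G S j :=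
  map_LL_le (N := AA G S j) (lsingle s) (fun l h1 h2 => Submodule.subset_span ⟨s, hs, l, h1, h2, rfl⟩) hc

lemma single_mem_UU' {G G' : Subgroup Γ} {S S' : Set Ω} {j : ℕ} {s : Ω} (hs : s ∈ S') {c : KK Γ}
    (hc : c ∈ LL (G' : Set Γ) j) : single s c ∈ UU G G' S S' j :=
  map_LL_le (N := UU G G' S S' j) (lsingle s)
    (fun l h1 h2 => Submodule.subset_span (Or.inl (Or.inr ⟨s, hs, l, h1, h2, rfl⟩))) hc

lemma trans_mem_UU {G G' : Subgroup Γ} {S S' : Set Ω} {j : ℕ} {s : Ω} (hs : s ∈ S) {g : Γ}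
    (hg : g ∈ G) {c : KK Γ} (hc : c ∈ LL (G : Set Γ) j) :
    single (g • s) (lt g c) - single s c ∈ UU G G' S S' j :=
  map_LL_le (N := UU G G' S S' j) (lsingle (g • s) ∘ₗ lt g - lsingle s)
    (fun l h1 h2 => Submodule.subset_span (Or.inl (Or.inl ⟨g, hg, s, hs, l, h1, h2, rfl⟩))) hc

lemma trans_mem_Co {G : Subgroup Γ} {j : ℕ} {g : Γ}
    (hg : g ∈ G) {c : KK Γ} (hc : c ∈ LL (G : Set Γ) j) : lt g c - c ∈ Co G j := by
  refine map_LL_le (N := Co G j) (lt g - LinearMap.id) ?_ hc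
  intro l h1 h2
  exact Submodule.subset_span (Or.inl ⟨g, hg, l, h1, h2, rfl⟩)

lemma AA_zero_le {G G' : Subgroup Γ} {S S' : Set Ω} : AA G S 0 ≤ UU G G' S S' 0 := by
  refine Submodule.span_le.2 ?_
  rintro _ ⟨s, hs, l, h1, h2, rfl⟩
  obtain rfl := List.length_eq_zero_iff.1 h1
  exact Submodule.subset_span (Or.inr ⟨s, hs, rfl, rfl⟩)

lemma dG_mem_AA {G : Subgroup Γ} {S : Set Ω} {j : ℕ} {c : CC Γ Ω} (hc : c ∈ AA G S (j + 1)) :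
    dG c ∈ AA G S j := by
  refine map_AA_le dG ?_ hc
  intro s hs l h1 h2
  rw [dG_single]
  exact single_mem_AA hs (bd_mem (single_mem_LL h1 h2))

lemma dG_mem_UU {G G' : Subgroup Γ} {S S' : Set Ω} {j : ℕ} {c : CC Γ Ω}
    (hc : c ∈ UU G G' S S' (j + 1)) : dG c ∈ UU G G' S S' j := by
  refine map_UU_le dG ?_ ?_ (by simp) hc
  · intro g hg s hs l h1 h2
    rw [dG_single, dG_single, bd_mapL]
    exact trans_mem_UU hs hg (bd_mem (single_mem_LL h1 h2))
  · intro s hs l h1 h2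
    rw [dG_single]
    exact single_mem_UU' hs (bd_mem (single_mem_LL h1 h2))

lemma single_UL_mem {G G' H H' : Subgroup Γ} {S S' : Set Ω} (hSS : S' ⊆ S) (hH : H ≤ G)
    (hH' : H' ≤ G') {j : ℕ} {s : Ω} (hs : s ∈ S')
    (hfix : ∀ h ∈ H, h • s = s) {c : KK Γ} (hc : c ∈ UL H H' j) :
    single s c ∈ UU G G' S S' j := by
  obtain ⟨a, ha, b, hb, rfl⟩ := Submodule.mem_sup.1 hc
  rw [single_add]
  refine Submodule.add_mem _ ?_ (single_mem_UU' hs (LL_mono (by exact_mod_cast hH') _ hb))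
  refine map_Co_le (lsingle s) ?_ ?_ ha
  · intro g hg l h1 h2
    have := trans_mem_UU (G := G) (G' := G') (S := S) (S' := S') (hSS hs) (hH hg)
      (single_mem_LL h1 (fun a ha => hH (h2 a ha)))
    rw [hfix g hg] at this
    exact this
  · rintro rfl
    exact Submodule.subset_span (Or.inr ⟨s, hSS hs, rfl, rfl⟩)

/-- Reduction to stabilizers: relative Shapiro lemma at the chain level. -/
theorem shapiro (G G' : Subgroup Γ) (hGG : G' ≤ G) (S S' : Set Ω) (hSS : S' ⊆ S)
    (hS : ∀ g ∈ G, ∀ s ∈ S, g • s ∈ S) (hS' : ∀ g ∈ G', ∀ s ∈ S', g • s ∈ S')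
    (hi : ∀ s ∈ S, ∃ g ∈ G, g • s ∈ S')
    (hii : ∀ s ∈ S', ∀ g ∈ G, g • s ∈ S' → ∃ g' ∈ G', g' • s = g • s)
    (j : ℕ) (x : CC Γ Ω) (hx : x ∈ AA G S (j + 1)) (hdx : dG x ∈ UU G G' S S' j) :
    ∃ w ∈ AA G S (j + 2), ∃ y : CC Γ Ω,
      (∀ r ∈ y.support, r ∈ S' ∧
        y r ∈ LL ((G ⊓ MulAction.stabilizer Γ r : Subgroup Γ) : Set Γ) (j + 1) ∧
        bd (y r) ∈ UL (G ⊓ MulAction.stabilizer Γ r) (G' ⊓ MulAction.stabilizer Γ r) j) ∧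
      x - dG w - y ∈ UU G G' S S' (j + 1) := by
  classical
  -- choice of representatives
  obtain ⟨rr, hrr1, hrr2⟩ : ∃ rr : Ω → Ω, (∀ s ∈ S, rr s ∈ S' ∧ ∃ g ∈ G, g • s = rr s) ∧
      (∀ g ∈ G, ∀ s, rr (g • s) = rr s) := by
    let q : Ω → MulAction.orbitRel.Quotient G Ω := fun s => Quotient.mk'' s
    have hq : ∀ s t, q s = q t ↔ ∃ g ∈ G, g • t = s := by
      intro s t
      rw [Quotient.eq'']
      change s ∈ MulAction.orbit G t ↔ _
      constructor
      · rintro ⟨g, hg⟩; exact ⟨g, g.2, hg⟩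
      · rintro ⟨g, hg, h⟩; exact ⟨⟨g, hg⟩, h⟩
    let rep : MulAction.orbitRel.Quotient G Ω → Ω := fun o =>
      if h : ∃ t ∈ S', q t = o then h.choose else o.out
    refine ⟨fun s => rep (q s), ?_, ?_⟩
    · intro s hs
      have h : ∃ t ∈ S', q t = q s := by
        obtain ⟨g, hg, h⟩ := hi s hs
        exact ⟨_, h, (hq _ _).2 ⟨g, hg, rfl⟩⟩
      have e : rep (q s) = h.choose := dif_pos h
      change rep (q s) ∈ S' ∧ ∃ g ∈ G, g • s = rep (q s)
      rw [e]
      refine ⟨h.choose_spec.1, ?_⟩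
      exact (hq _ _).1 h.choose_spec.2
    · intro g hg s
      have : q (g • s) = q s := (hq _ _).2 ⟨g, hg, rfl⟩
      simp only [this]
  have hγ : ∀ s : Ω, ∃ g : Γ, (s ∈ S → g ∈ G ∧ g • s = rr s) ∧ (s ∈ S' → g ∈ G') := by
    intro s
    by_cases h : s ∈ S'
    · obtain ⟨h1, g, hg, h2⟩ := hrr1 s (hSS h)
      obtain ⟨g', hg', h3⟩ := hii s h g hg (h2 ▸ h1)
      exact ⟨g', fun _ => ⟨hGG hg', h3.trans h2⟩, fun _ => hg'⟩
    · by_cases h' : s ∈ S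
      · obtain ⟨h1, g, hg, h2⟩ := hrr1 s h'
        exact ⟨g, fun _ => ⟨hg, h2⟩, fun h3 => absurd h3 h⟩
      · exact ⟨1, fun h3 => absurd h3 h', fun h3 => absurd h3 h⟩
  choose γ hγ1 hγ2 using hγ
  let φ : Ω → Γ → Γ := fun s a => a * (γ (a⁻¹ • s))⁻¹
  let ψ : Ω → Γ → Γ := fun s a => γ s * φ s a
  have hφG : ∀ s ∈ S, ∀ a ∈ G, φ s a ∈ G := fun s hs a ha =>
    G.mul_mem ha (G.inv_mem (hγ1 _ (hS _ (G.inv_mem ha) _ hs)).1)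
  have hφG' : ∀ s ∈ S', ∀ a ∈ G', φ s a ∈ G' := fun s hs a ha =>
    G'.mul_mem ha (G'.inv_mem (hγ2 _ (hS' _ (G'.inv_mem ha) _ hs)))
  have hφe : ∀ s g a, φ (g • s) (g * a) = g * φ s a := by
    intro s g a
    simp only [φ, mul_inv_rev, mul_smul, inv_smul_smul, mul_assoc]
  have hψst : ∀ s ∈ S, ∀ a ∈ G, ψ s a • rr s = rr s := by
    intro s hs a ha
    have h1 := hγ1 _ (hS _ (G.inv_mem ha) _ hs)
    rw [hrr2 _ (G.inv_mem ha)] at h1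
    have h2 := hγ1 s hs
    simp only [ψ, φ, mul_smul]
    rw [← h1.2, inv_smul_smul, smul_inv_smul, h2.2, h1.2]
  let P : CC Γ Ω →ₗ[ℤ] CC Γ Ω := Finsupp.lsum ℤ (fun s => lsingle s ∘ₗ mapL (φ s))
  let Q : CC Γ Ω →ₗ[ℤ] CC Γ Ω := Finsupp.lsum ℤ (fun s => lsingle (rr s) ∘ₗ mapL (ψ s))
  let H : CC Γ Ω →ₗ[ℤ] CC Γ Ω := Finsupp.lsum ℤ (fun s => lsingle s ∘ₗ prism (φ s))
  have hP : ∀ s c, P (single s c) = single s (mapL (φ s) c) := fun s c => by simp [P]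
  have hQ : ∀ s c, Q (single s c) = single (rr s) (mapL (ψ s) c) := fun s c => by simp [Q]
  have hH : ∀ s c, H (single s c) = single s (prism (φ s) c) := fun s c => by simp [H]
  have F1 : ∀ c, dG (H c) + H (dG c) = P c - c := by
    intro c
    have : dG ∘ₗ H + H ∘ₗ dG = P - LinearMap.id := by
      refine Finsupp.lhom_ext fun s c => ?_
      simp only [LinearMap.add_apply, LinearMap.comp_apply, LinearMap.sub_apply, LinearMap.id_apply,
        hH, hP, dG_single]
      rw [← single_add, prism_formula, single_sub]
    exact LinearMap.congr_fun this c
  have F5 : ∀ c, dG (Q c) = Q (dG c) := by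
    intro c
    have : dG ∘ₗ Q = Q ∘ₗ dG := by
      refine Finsupp.lhom_ext fun s c => ?_
      simp only [LinearMap.comp_apply, hQ, dG_single, bd_mapL]
    exact LinearMap.congr_fun this c
  have F2 : ∀ j, ∀ c ∈ UU G G' S S' j, H c ∈ UU G G' S S' (j + 1) := by
    intro j c hc
    refine map_UU_le H ?_ ?_ ?_ hc
    · intro g hg s hs l h1 h2
      rw [hH, hH, mapL_single, prism_single, prism_single,
        ← mapL_prism (φ s) (φ (g • s)) (fun a => g * a) l (hφe s g)]
      exact trans_mem_UU hs hg (prism0_mem _ (hφG s hs) l j h1 h2)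
    · intro s hs l h1 h2
      rw [hH, prism_single]
      exact single_mem_UU' hs (prism0_mem _ (hφG' s hs) l j h1 h2)
    · intro _ s hs
      rw [hH, prism_single]
      simp [prism0]
  have F3 : ∀ j, ∀ c ∈ AA G S j, H c ∈ AA G S (j + 1) := by
    intro j c hc
    refine map_AA_le H ?_ hc
    intro s hs l h1 h2
    rw [hH, prism_single]
    exact single_mem_AA hs (prism0_mem _ (hφG s hs) l j h1 h2)
  have F4 : ∀ j, ∀ c ∈ AA G S j, Q c - P c ∈ UU G G' S S' j := by
    intro j c hc
    refine map_AA_le (Q - P) ?_ hc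
    intro s hs l h1 h2
    rw [LinearMap.sub_apply, hQ, hP]
    have := trans_mem_UU (G := G) (G' := G') (S := S) (S' := S') hs (hγ1 s hs).1
      (mapL_mem (f := φ s) (hφG s hs) (single_mem_LL h1 h2))
    rwa [(hγ1 s hs).2, mapL_mapL] at this
  have hψG : ∀ s ∈ S, ∀ a ∈ G, ψ s a ∈ G ⊓ MulAction.stabilizer Γ (rr s) := fun s hs a ha =>
    ⟨G.mul_mem (hγ1 s hs).1 (hφG s hs a ha), hψst s hs a ha⟩
  refine ⟨-(H x), Submodule.neg_mem _ (F3 _ _ hx), Q x, ?_, ?_⟩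
  · intro r hr
    refine ⟨?_, ?_, ?_⟩
    · by_contra hrS
      have : (lapply r ∘ₗ Q) x ∈ (⊥ : Submodule ℤ (KK Γ)) := by
        refine map_AA_le (lapply r ∘ₗ Q) ?_ hx
        intro s hs l h1 h2
        have hne : rr s ≠ r := fun h => hrS (h ▸ (hrr1 s hs).1)
        simp [hQ, hne]
      rw [Finsupp.mem_support_iff] at hr
      exact hr (by simpa using this)
    · refine map_AA_le (lapply r ∘ₗ Q) ?_ hx
      intro s hs l h1 h2
      rw [LinearMap.comp_apply, hQ, lapply_apply]
      by_cases h : rr s = r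
      · subst h
        rw [single_eq_same]
        exact mapL_mem (hψG s hs) (single_mem_LL h1 h2)
      · rw [single_apply, if_neg h]; exact Submodule.zero_mem _
    · have e : bd (Q x r) = (lapply r ∘ₗ Q) (dG x) := by
        rw [LinearMap.comp_apply, ← F5]; simp [dG]
      rw [e]
      refine map_UU_le (lapply r ∘ₗ Q) ?_ ?_ ?_ hdx
      · intro g hg s hs l h1 h2
        simp only [LinearMap.comp_apply, hQ, lapply_apply]
        rw [hrr2 g hg]
        by_cases h : rr s = r
        · subst h
          rw [single_eq_same, single_eq_same]
          refine Submodule.mem_sup_left ?_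
          have hk : γ (g • s) * g * (γ s)⁻¹ ∈ G ⊓ MulAction.stabilizer Γ (rr s) := by
            refine ⟨G.mul_mem (G.mul_mem (hγ1 _ (hS g hg s hs)).1 hg) (G.inv_mem (hγ1 s hs).1), ?_⟩
            change _ • rr s = rr s
            rw [mul_smul, mul_smul, ← (hγ1 s hs).2, inv_smul_smul, (hγ1 _ (hS g hg s hs)).2,
              (hγ1 s hs).2, hrr2 g hg]
          have := trans_mem_Co hk (mapL_mem (f := ψ s) (hψG s hs) (single_mem_LL h1 h2))
          convert this using 2
          rw [lt, lt, mapL_mapL, mapL_mapL]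
          congr 2
          funext a
          simp only [ψ, hφe]
          group
        · rw [single_apply, if_neg h, single_apply, if_neg h, sub_zero]
          exact Submodule.zero_mem _
      · intro s hs l h1 h2
        simp only [LinearMap.comp_apply, hQ, lapply_apply]
        by_cases h : rr s = r
        · subst h
          rw [single_eq_same]
          refine Submodule.mem_sup_right ?_
          refine mapL_mem ?_ (single_mem_LL h1 h2)
          intro a ha
          exact ⟨G'.mul_mem (hγ2 s hs) (hφG' s hs a ha), hψst s (hSS hs) a (hGG ha)⟩
        · rw [single_apply, if_neg h]
          exact Submodule.zero_mem _
      · rintro rfl s hs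
        simp only [LinearMap.comp_apply, hQ, lapply_apply]
        by_cases h : rr s = r
        · subst h
          rw [single_eq_same]
          refine Submodule.mem_sup_left (Submodule.subset_span (Or.inr ⟨rfl, ?_⟩))
          simp
        · rw [single_apply, if_neg h]
          exact Submodule.zero_mem _
  · have h1 := F2 _ _ hdx
    have h2 := F4 _ _ hx
    have := Submodule.sub_mem _ (Submodule.neg_mem _ h2) h1
    convert this using 1
    have e := F1 x
    rw [map_neg, eq_sub_of_add_eq e]
    abel

lemma van_of_shapiro (G G' : Subgroup Γ) (hGG : G' ≤ G) (S S' : Set Ω) (hSS : S' ⊆ S)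
    (hS : ∀ g ∈ G, ∀ s ∈ S, g • s ∈ S) (hS' : ∀ g ∈ G', ∀ s ∈ S', g • s ∈ S')
    (hi : ∀ s ∈ S, ∃ g ∈ G, g • s ∈ S')
    (hii : ∀ s ∈ S', ∀ g ∈ G, g • s ∈ S' → ∃ g' ∈ G', g' • s = g • s)
    (j : ℕ)
    (hR : ∀ r ∈ S', RelVan (G ⊓ MulAction.stabilizer Γ r) (G' ⊓ MulAction.stabilizer Γ r) j)
    (x : CC Γ Ω) (hx : x ∈ AA G S (j + 1)) (hdx : dG x ∈ UU G G' S S' j) :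
    ∃ w ∈ AA G S (j + 2), x - dG w ∈ UU G G' S S' (j + 1) := by
  classical
  obtain ⟨w, hw, y, hy, hxy⟩ := shapiro G G' hGG S S' hSS hS hS' hi hii j x hx hdx
  have hv : ∀ r, ∃ v : KK Γ, r ∈ y.support →
      v ∈ LL ((G ⊓ MulAction.stabilizer Γ r : Subgroup Γ) : Set Γ) (j + 2) ∧
      y r - bd v ∈ UL (G ⊓ MulAction.stabilizer Γ r) (G' ⊓ MulAction.stabilizer Γ r) (j + 1) := by
    intro r
    by_cases h : r ∈ y.support
    · obtain ⟨h1, h2, h3⟩ := hy r h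
      obtain ⟨v, h4, h5⟩ := hR r h1 _ h2 h3
      exact ⟨v, fun _ => ⟨h4, h5⟩⟩
    · exact ⟨0, fun h' => absurd h' h⟩
  choose v hv using hv
  refine ⟨w + ∑ r ∈ y.support, single r (v r), Submodule.add_mem _ hw ?_, ?_⟩
  · refine Submodule.sum_mem _ fun r hr => single_mem_AA (hSS (hy r hr).1) ?_
    exact LL_mono (fun a ha => ha.1) _ (hv r hr).1
  · have h1 : ∑ r ∈ y.support, single r (y r - bd (v r)) ∈ UU G G' S S' (j + 1) := by
      refine Submodule.sum_mem _ fun r hr => ?_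
      exact single_UL_mem hSS inf_le_left inf_le_left (hy r hr).1 (fun h hh => MulAction.mem_stabilizer_iff.1 (Subgroup.mem_inf.1 hh).2) (hv r hr).2
    have := Submodule.add_mem _ hxy h1
    convert this using 1
    have e : y = ∑ r ∈ y.support, single r (y r) := (Finsupp.sum_single y).symm
    simp only [map_add, map_sum, dG_single, single_sub, Finset.sum_sub_distrib]
    rw [← e]
    abel

lemma van_zero (G G' : Subgroup Γ) (S S' : Set Ω) 
    (hS : ∀ g ∈ G, ∀ s ∈ S, g • s ∈ S) 
    (hi : ∀ s ∈ S, ∃ g ∈ G, g • s ∈ S')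
    (x : CC Γ Ω) (hx : x ∈ AA G S 1) :
    ∃ w ∈ AA G S 2, x - dG w ∈ UU G G' S S' 1 := by
  have : x ∈ (AA G S 2).map dG ⊔ UU G G' S S' 1 := by
    refine map_AA_le (LinearMap.id : CC Γ Ω →ₗ[ℤ] CC Γ Ω) ?_ hx
    intro s hs l h1 h2
    obtain ⟨a, rfl⟩ := List.length_eq_one_iff.1 h1
    obtain ⟨g, hg, hgs⟩ := hi s hs
    have ha : a ∈ G := by simpa using h2
    have t1 := trans_mem_UU (G := G) (G' := G') (S := S) (S' := S') hs hg (single_mem_LL h1 h2)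
    have t2 : single (g • s) (single [(1 : Γ)] (1 : ℤ)) ∈ UU G G' S S' 1 :=
      single_mem_UU' hgs (single_mem_LL rfl (by simp [G'.one_mem]))
    have t3 : single (g • s) (single [g * a, (1 : Γ)] (1 : ℤ)) ∈ AA G S 2 :=
      single_mem_AA (hS g hg s hs) (single_mem_LL rfl (by simp [G.mul_mem hg ha, G.one_mem]))
    have e : (LinearMap.id : CC Γ Ω →ₗ[ℤ] CC Γ Ω) (single s (single [a] (1 : ℤ))) =
      - dG (single (g • s) (single [g * a, (1 : Γ)] (1 : ℤ))) +
        (single (g • s) (single [(1 : Γ)] (1 : ℤ)) -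
        (single (g • s) (lt g (single [a] 1)) - single s (single [a] 1))) := by
      simp only [dG_single, bd_single, bd0, map_zero, sub_zero, consL_single, single_sub,
        mapL_single, List.map_cons, List.map_nil, LinearMap.id_apply]
      abel
    rw [e]
    exact Submodule.add_mem _ (Submodule.mem_sup_left (Submodule.neg_mem _
      (Submodule.mem_map_of_mem t3)))
      (Submodule.mem_sup_right (Submodule.sub_mem _ t2 t1))
  obtain ⟨_, ⟨w, hw, rfl⟩, b, hb, rfl⟩ := Submodule.mem_sup.1 this
  exact ⟨w, hw, by simpa using hb⟩

end Equivariant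

end Part2

section Part3

open Finsupp

section Simplices
set_option linter.unusedSectionVars false
variable {Γ P : Type} [Group Γ] [MulAction Γ P]

instance listAct : MulAction Γ (List P) where
  smul g l := l.map (fun p => g • p)
  one_smul l := by
    change l.map _ = l
    simp
  mul_smul g h l := by
    change l.map _ = (l.map _).map _
    simp [mul_smul, Function.comp_def]

lemma smul_list (g : Γ) (l : List P) : g • l = l.map (fun p => g • p) := rfl

@[simp] lemma smul_nil' (g : Γ) : g • ([] : List P) = [] := rfl

@[simp] lemma smul_cons' (g : Γ) (p : P) (l : List P) : g • (p :: l) = (g • p) :: (g • l) := rfl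

lemma smul_append' (g : Γ) (l l' : List P) : g • (l ++ l') = (g • l) ++ (g • l') := by
  simp [smul_list]

lemma length_smul' (g : Γ) (l : List P) : (g • l).length = l.length := by
  simp [smul_list]

noncomputable def consX (p : P) : CC Γ (List P) →ₗ[ℤ] CC Γ (List P) :=
  Finsupp.lmapDomain (KK Γ) ℤ (List.cons p)

@[simp] lemma consX_single (p : P) (s : List P) (c : KK Γ) :
    consX p (single s c) = single (p :: s) c := by simp [consX]

noncomputable def dX0 : List P → (KK Γ →ₗ[ℤ] CC Γ (List P))
  | [] => 0
  | p :: s => lsingle s - consX p ∘ₗ dX0 s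

noncomputable def dX : CC Γ (List P) →ₗ[ℤ] CC Γ (List P) := Finsupp.lsum ℤ dX0

lemma dX_single (s : List P) (c : KK Γ) : dX (single s c) = dX0 s c := by simp [dX]

lemma dX_consX (p : P) (x : CC Γ (List P)) : dX (consX p x) = x - consX p (dX x) := by
  have : dX ∘ₗ consX p = (LinearMap.id : CC Γ (List P) →ₗ[ℤ] _) - consX p ∘ₗ dX := by
    refine Finsupp.lhom_ext fun s c => ?_
    simp [dX_single, dX0]
  exact LinearMap.congr_fun this x

lemma dX_dX (x : CC Γ (List P)) : dX (dX x) = 0 := by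
  have : (dX : CC Γ (List P) →ₗ[ℤ] _) ∘ₗ dX = 0 := by
    refine Finsupp.lhom_ext fun s c => ?_
    simp only [LinearMap.comp_apply, LinearMap.zero_apply]
    induction s with
    | nil => simp [dX_single, dX0]
    | cons p s ih =>
      rw [← consX_single, dX_consX, map_sub, dX_consX, ih]; simp
  exact LinearMap.congr_fun this x

noncomputable def tr (f : P → P) (φ : KK Γ →ₗ[ℤ] KK Γ) : CC Γ (List P) →ₗ[ℤ] CC Γ (List P) :=
  Finsupp.lsum ℤ (fun s => lsingle (s.map f) ∘ₗ φ)

@[simp] lemma tr_single (f : P → P) (φ : KK Γ →ₗ[ℤ] KK Γ) (s : List P) (c : KK Γ) :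
    tr f φ (single s c) = single (s.map f) (φ c) := by simp [tr]

lemma tr_consX (f : P → P) (φ : KK Γ →ₗ[ℤ] KK Γ) (p : P) (x : CC Γ (List P)) :
    tr f φ (consX p x) = consX (f p) (tr f φ x) := by
  have : tr f φ ∘ₗ consX p = consX (f p) ∘ₗ tr f φ := by
    refine Finsupp.lhom_ext fun s c => ?_
    simp
  exact LinearMap.congr_fun this x

lemma dX_tr (f : P → P) (φ : KK Γ →ₗ[ℤ] KK Γ) (x : CC Γ (List P)) :
    dX (tr f φ x) = tr f φ (dX x) := by
  have : dX ∘ₗ tr f φ = tr f φ ∘ₗ dX := by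
    refine Finsupp.lhom_ext fun s c => ?_
    simp only [LinearMap.comp_apply]
    induction s with
    | nil => simp [dX_single, dX0]
    | cons p s ih =>
      rw [← consX_single, tr_consX, dX_consX, dX_consX, ih, map_sub, tr_consX]
  exact LinearMap.congr_fun this x

lemma dG_eq_tr (x : CC Γ (List P)) : dG x = tr id bd x := by
  have : (dG : CC Γ (List P) →ₗ[ℤ] _) = tr id bd := by
    refine Finsupp.lhom_ext fun s c => ?_
    simp
  exact LinearMap.congr_fun this x

lemma dX_dG (x : CC Γ (List P)) : dX (dG x) = dG (dX x) := by
  rw [dG_eq_tr, dG_eq_tr, dX_tr]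

lemma dX0_mem (s : List P) (c : KK Γ) : ∀ (N : Submodule ℤ (CC Γ (List P)))
    (_ : ∀ t : List P, t.Sublist s → t.length + 1 = s.length → single t c ∈ N), dX0 s c ∈ N := by
  induction s with
  | nil => intro N _; simp [dX0]
  | cons p s ih =>
    intro N h
    simp only [dX0, LinearMap.sub_apply, lsingle_apply, LinearMap.comp_apply]
    refine Submodule.sub_mem _ (h s (List.sublist_cons_self p s) rfl) ?_
    refine ih (N.comap (consX p)) ?_
    intro t ht hl
    rw [Submodule.mem_comap, consX_single]
    exact h _ (ht.cons_cons p) (by simp [hl])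

/-- normal form of an element -/
noncomputable def nu : CC Γ (List P) →ₗ[ℤ] CC Γ (List P) :=
  Finsupp.lsum ℤ (fun s => Finsupp.linearCombination ℤ (fun l : List Γ =>
    single ((l.headD 1)⁻¹ • s) (lt (l.headD 1)⁻¹ (single l 1))))

lemma nu_single (s : List P) (l : List Γ) : nu (single s (single l 1)) =
    single ((l.headD 1)⁻¹ • s) (lt (l.headD 1)⁻¹ (single l 1)) := by
  simp [nu]

lemma dX_nu (x : CC Γ (List P)) : dX (nu x) = nu (dX x) := by
  have : (dX : CC Γ (List P) →ₗ[ℤ] _) ∘ₗ nu = nu ∘ₗ dX := by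
    refine Finsupp.lhom_ext' fun s => Finsupp.lhom_ext' fun l => LinearMap.ext_ring ?_
    simp only [LinearMap.comp_apply, lsingle_apply]
    have h : ∀ t : List P, nu (single t (single l 1)) =
        tr (fun p => (l.headD 1)⁻¹ • p) (lt (l.headD 1)⁻¹) (single t (single l 1)) := by
      intro t
      rw [nu_single, tr_single, smul_list]
    rw [h, dX_tr, dX_single, eq_comm]
    have := dX0_mem s (single l (1 : ℤ)) (LinearMap.eqLocus nu
      (tr (fun p => (l.headD 1)⁻¹ • p) (lt (l.headD 1)⁻¹))) (fun t _ _ => h t)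
    exact this
  exact LinearMap.congr_fun this x

lemma AA_apply {Ω : Type} [MulAction Γ Ω] {G : Subgroup Γ} {S : Set Ω} {j : ℕ} {x : CC Γ Ω} (hx : x ∈ AA G S j)
    (s : Ω) : x s ∈ LL (G : Set Γ) j := by
  classical
  refine map_AA_le (lapply s) ?_ hx
  intro t ht l h1 h2
  rw [lapply_apply, single_apply]
  split_ifs
  · exact single_mem_LL h1 h2
  · exact Submodule.zero_mem _

lemma AA_supp {Ω : Type} [MulAction Γ Ω] {G : Subgroup Γ} {S : Set Ω} {j : ℕ} {x : CC Γ Ω} (hx : x ∈ AA G S j)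
    (s : Ω) (hs : s ∈ x.support) : s ∈ S := by
  classical
  by_contra h
  rw [Finsupp.mem_support_iff] at hs
  have : lapply (R := ℤ) s x ∈ (⊥ : Submodule ℤ (KK Γ)) := by
    refine map_AA_le (lapply s) ?_ hx
    intro t ht l h1 h2
    have hne : t ≠ s := fun e => h (e ▸ ht)
    rw [lapply_apply, single_apply, if_neg hne]
    exact Submodule.zero_mem _
  exact hs (by simpa using this)

lemma AA_mono {Ω : Type} [MulAction Γ Ω] {G G' : Subgroup Γ} {S S' : Set Ω} (hG : G' ≤ G) (hS : S' ⊆ S) (j : ℕ) :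
    AA G' S' j ≤ AA G S j := by
  refine Submodule.span_mono ?_
  rintro _ ⟨s, hs, l, h1, h2, rfl⟩
  exact ⟨s, hS hs, l, h1, fun a ha => hG (h2 a ha), rfl⟩

/-- exactness from cones -/
lemma cone_exact {G : Subgroup Γ} {S S1 : Set (List P)}
    (hcone : ∀ T : Finset (List P), (∀ s ∈ T, s ∈ S) → ∃ p, ∀ s ∈ T, p :: s ∈ S1)
    {j : ℕ} {x : CC Γ (List P)} (hx : x ∈ AA G S j) (hd : dX x = 0) :
    ∃ y ∈ AA G S1 j, dX y = x := by
  obtain ⟨p, hp⟩ := hcone x.support (fun s hs => AA_supp hx s hs)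
  refine ⟨consX p x, ?_, by rw [dX_consX, hd]; simp⟩
  have e : consX p x = ∑ s ∈ x.support, single (p :: s) (x s) := by
    conv_lhs => rw [← Finsupp.sum_single x]
    simp [Finsupp.sum, map_sum]
  rw [e]
  exact Submodule.sum_mem _ fun s hs => single_mem_AA (hp s hs) (AA_apply hx s)

lemma dX_mem_AA {G : Subgroup Γ} {S S1 : Set (List P)}
    (hf : ∀ s ∈ S1, ∀ t : List P, t.Sublist s → t.length + 1 = s.length → t ∈ S)
    {j : ℕ} {x : CC Γ (List P)} (hx : x ∈ AA G S1 j) : dX x ∈ AA G S j := by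
  refine map_AA_le dX ?_ hx
  intro s hs l h1 h2
  rw [dX_single]
  exact dX0_mem _ _ _ fun t ht hl => single_mem_AA (hf s hs t ht hl) (single_mem_LL h1 h2)

lemma dX_mem_UU {G G' : Subgroup Γ} {S S1 S' S1' : Set (List P)}
    (hf : ∀ s ∈ S1, ∀ t : List P, t.Sublist s → t.length + 1 = s.length → t ∈ S)
    (hf' : ∀ s ∈ S1', ∀ t : List P, t.Sublist s → t.length + 1 = s.length → t ∈ S')
    {j : ℕ} {x : CC Γ (List P)} (hx : x ∈ UU G G' S1 S1' j) : dX x ∈ UU G G' S S' j := by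
  refine map_UU_le dX ?_ ?_ ?_ hx
  · intro g hg s hs l h1 h2
    have e : single (g • s) (lt g (single l 1)) =
        tr (fun p => g • p) (lt g) (single s (single l 1)) := by rw [tr_single, smul_list]
    rw [e, dX_tr, dX_single]
    refine dX0_mem s (single l 1)
      ((UU G G' S S' j).comap (tr (fun p => g • p) (lt g) - LinearMap.id)) ?_
    intro t ht hl
    rw [Submodule.mem_comap, LinearMap.sub_apply, tr_single, ← smul_list]
    exact trans_mem_UU (hf s hs t ht hl) hg (single_mem_LL h1 h2)
  · intro s hs l h1 h2
    rw [dX_single]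
    exact dX0_mem _ _ _ fun t ht hl => single_mem_UU' (hf' s hs t ht hl) (single_mem_LL h1 h2)
  · rintro rfl s hs
    rw [dX_single]
    exact dX0_mem _ _ _ fun t ht hl => AA_zero_le (single_mem_AA (hf s hs t ht hl)
      (single_mem_LL rfl (by simp)))

lemma headD_mem {G : Subgroup Γ} {l : List Γ} (h : ∀ a ∈ l, a ∈ (G : Set Γ)) :
    l.headD 1 ∈ G := by
  cases l with
  | nil => exact G.one_mem
  | cons a l => exact h a (by simp)

lemma ex_lemma {G G' : Subgroup Γ} (hGG : G' ≤ G) {S0 S1 S2 S0' S1' : Set (List P)}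
    (hS1 : ∀ g ∈ G, ∀ s ∈ S1, g • s ∈ S1) (hS0' : ∀ g ∈ G', ∀ s ∈ S0', g • s ∈ S0')
    (hSS : S1' ⊆ S1)
    (hcone : ∀ T : Finset (List P), (∀ s ∈ T, s ∈ S1) → ∃ p, ∀ s ∈ T, p :: s ∈ S2)
    (hcone' : ∀ T : Finset (List P), (∀ s ∈ T, s ∈ S0') → ∃ p, ∀ s ∈ T, p :: s ∈ S1')
    {j : ℕ} {x : CC Γ (List P)} (hx : x ∈ AA G S1 (j + 1)) (hd : dX x ∈ UU G G' S0 S0' (j + 1)) :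
    ∃ y ∈ AA G S2 (j + 1), x - dX y ∈ UU G G' S1 S1' (j + 1) := by
  have h1 : nu (dX x) ∈ AA G' S0' (j + 1) := by
    refine map_UU_le nu ?_ ?_ (by simp) hd
    · intro g hg s hs l h1 h2
      have : nu (single (g • s) (lt g (single l 1))) = nu (single s (single l 1)) := by
        rw [mapL_single, nu_single, nu_single, mapL_single, mapL_single]
        cases l with
        | nil => simp at h1
        | cons a l =>
          simp [mul_smul, mul_assoc, Function.comp_def]
      rw [this, sub_self]
      exact Submodule.zero_mem _
    · intro s hs l h1 h2
      rw [nu_single]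
      have := headD_mem h2
      exact single_mem_AA (hS0' _ (G'.inv_mem this) _ hs)
        (mapL_mem (fun a ha => G'.mul_mem (G'.inv_mem this) ha) (single_mem_LL h1 h2))
  have h2 : nu x ∈ AA G S1 (j + 1) := by
    refine map_AA_le nu ?_ hx
    intro s hs l h1 h2
    rw [nu_single]
    have := headD_mem h2
    exact single_mem_AA (hS1 _ (G.inv_mem this) _ hs)
        (mapL_mem (fun a ha => G.mul_mem (G.inv_mem this) ha) (single_mem_LL h1 h2))
  have h3 : nu x - x ∈ UU G G' S1 S1' (j + 1) := by
    refine map_AA_le (nu - LinearMap.id) ?_ hx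
    intro s hs l h1 h2
    rw [LinearMap.sub_apply, nu_single]
    exact trans_mem_UU hs (G.inv_mem (headD_mem h2)) (single_mem_LL h1 h2)
  obtain ⟨y', hy', e'⟩ := cone_exact hcone' h1 (by rw [dX_nu, dX_dX, map_zero])
  obtain ⟨y, hy, e⟩ := cone_exact hcone (Submodule.sub_mem _ h2 (AA_mono hGG hSS _ hy'))
    (by rw [map_sub, dX_nu, e', sub_self])
  refine ⟨y, hy, ?_⟩
  rw [e]
  have h4 : y' ∈ UU G G' S1 S1' (j + 1) := by
    refine map_AA_le (LinearMap.id : CC Γ (List P) →ₗ[ℤ] _) ?_ hy'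
    intro s hs l h1 h2
    exact single_mem_UU' hs (single_mem_LL h1 h2)
  have := Submodule.add_mem _ (Submodule.neg_mem _ h3) h4
  convert this using 1
  abel

lemma z_lemma {G G' : Subgroup Γ} (hGG : G' ≤ G) {S S' S0 S0' : Set (List P)} (hSS : S' ⊆ S)
    (hS : ∀ g ∈ G, ∀ s ∈ S, g • s ∈ S) (hS' : ∀ g ∈ G', ∀ s ∈ S', g • s ∈ S')
    (hi : ∀ s ∈ S, ∃ g ∈ G, g • s ∈ S')
    (hii : ∀ s ∈ S', ∀ g ∈ G, g • s ∈ S' → ∃ g' ∈ G', g' • s = g • s)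
    (hlen : ∀ s ∈ S, s.length = 1) (h0 : [] ∈ S0') (h00 : S0' ⊆ S0)
    (hf : ∀ s ∈ S, ∀ t : List P, t.Sublist s → t.length + 1 = s.length → t ∈ S0)
    (hf' : ∀ s ∈ S', ∀ t : List P, t.Sublist s → t.length + 1 = s.length → t ∈ S0')
    (k : ℕ)
    (hZ0 : ∀ r ∈ S', ∀ b ∈ LL ((G ⊓ MulAction.stabilizer Γ r : Subgroup Γ) : Set Γ) (k + 1),
      bd b ∈ UL (G ⊓ MulAction.stabilizer Γ r) (G' ⊓ MulAction.stabilizer Γ r) k →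
      ∃ w ∈ LL (G : Set Γ) (k + 2), b - bd w ∈ UL G G' (k + 1))
    (x : CC Γ (List P)) (hx : x ∈ AA G S (k + 1)) (hdx : dG x ∈ UU G G' S S' k) :
    ∃ w ∈ AA G S0 (k + 2), dX x - dG w ∈ UU G G' S0 S0' (k + 1) := by
  classical
  obtain ⟨w, hw, y, hy, hxy⟩ := shapiro G G' hGG S S' hSS hS hS' hi hii k x hx hdx
  have hv : ∀ r, ∃ v : KK Γ, r ∈ y.support →
      v ∈ LL (G : Set Γ) (k + 2) ∧ y r - bd v ∈ UL G G' (k + 1) := by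
    intro r
    by_cases h : r ∈ y.support
    · obtain ⟨h1, h2, h3⟩ := hy r h
      obtain ⟨v, h4, h5⟩ := hZ0 r h1 _ h2 h3
      exact ⟨v, fun _ => ⟨h4, h5⟩⟩
    · exact ⟨0, fun h' => absurd h' h⟩
  choose v hv using hv
  refine ⟨dX w + ∑ r ∈ y.support, single [] (v r), Submodule.add_mem _ (dX_mem_AA hf hw) ?_, ?_⟩
  · exact Submodule.sum_mem _ fun r hr => single_mem_AA (h00 h0) (hv r hr).1
  · have h1 : ∑ r ∈ y.support, single [] (y r - bd (v r)) ∈ UU G G' S0 S0' (k + 1) := by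
      refine Submodule.sum_mem _ fun r hr => ?_
      exact single_UL_mem h00 le_rfl le_rfl h0 (fun h hh => rfl) (hv r hr).2
    have := Submodule.add_mem _ (dX_mem_UU hf hf' hxy) h1
    convert this using 1
    have e : dX y = ∑ r ∈ y.support, single [] (y r) := by
      conv_lhs => rw [← Finsupp.sum_single y]
      rw [Finsupp.sum, map_sum]
      refine Finset.sum_congr rfl fun r hr => ?_
      obtain ⟨p, rfl⟩ := List.length_eq_one_iff.1 (hlen r (hSS (hy r hr).1))
      simp [dX_single, dX0]
    simp only [map_add, map_sum, map_sub, dG_single, single_sub, Finset.sum_sub_distrib, dX_dG, e]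
    abel

/-- The inductive step, abstractly. -/
theorem step_abs {G G' : Subgroup Γ} (hGG : G' ≤ G) (S S' : ℕ → Set (List P)) (k : ℕ)
    (hk : 1 ≤ k)
    (hSS : ∀ i, S' i ⊆ S i)
    (hS : ∀ i, ∀ g ∈ G, ∀ s ∈ S i, g • s ∈ S i) (hS' : ∀ i, ∀ g ∈ G', ∀ s ∈ S' i, g • s ∈ S' i)
    (hlen : ∀ i, ∀ s ∈ S i, s.length = i) (h0 : [] ∈ S' 0)
    (hf : ∀ i, ∀ s ∈ S (i + 1), ∀ t : List P, t.Sublist s → t.length + 1 = s.length → t ∈ S i)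
    (hf' : ∀ i, ∀ s ∈ S' (i + 1), ∀ t : List P, t.Sublist s → t.length + 1 = s.length → t ∈ S' i)
    (hi : ∀ i, i ≤ k + 1 → ∀ s ∈ S i, ∃ g ∈ G, g • s ∈ S' i)
    (hii : ∀ i, i ≤ k → ∀ s ∈ S' i, ∀ g ∈ G, g • s ∈ S' i → ∃ g' ∈ G', g' • s = g • s)
    (hcone : ∀ i, i ≤ k → ∀ T : Finset (List P), (∀ s ∈ T, s ∈ S i) →
      ∃ p, ∀ s ∈ T, p :: s ∈ S (i + 1))
    (hcone' : ∀ i, i + 1 ≤ k → ∀ T : Finset (List P), (∀ s ∈ T, s ∈ S' i) →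
      ∃ p, ∀ s ∈ T, p :: s ∈ S' (i + 1))
    (hR : ∀ i j, i + j + 1 = k → 1 ≤ j → ∀ r ∈ S' (i + 2),
      RelVan (G ⊓ MulAction.stabilizer Γ r) (G' ⊓ MulAction.stabilizer Γ r) j)
    (hZ0 : ∀ r ∈ S' 1, ∀ b ∈ LL ((G ⊓ MulAction.stabilizer Γ r : Subgroup Γ) : Set Γ) (k + 1),
      bd b ∈ UL (G ⊓ MulAction.stabilizer Γ r) (G' ⊓ MulAction.stabilizer Γ r) k →
      ∃ w ∈ LL (G : Set Γ) (k + 2), b - bd w ∈ UL G G' (k + 1)) :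
    RelVan G G' k := by
  classical
  have main := bicomplex_main (C := CC Γ (List P)) dG dX (fun i j => AA G (S i) j)
    (fun i j => UU G G' (S i) (S' i) j) k dX_dG dG_dG dX_dX
    (fun i j c hc => dG_mem_AA hc) (fun i j c hc => dG_mem_UU hc)
    (fun i j c hc => dX_mem_UU (hf i) (hf' i) hc)
    (fun i => AA_zero_le)
    (by
      intro x hx
      have hd : dX x = 0 := by
        have : dX x ∈ (⊥ : Submodule ℤ (CC Γ (List P))) := by
          refine map_AA_le dX ?_ hx
          intro s hs l h1 h2
          obtain rfl := List.length_eq_zero_iff.1 (hlen 0 s hs)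
          simp [dX_single, dX0]
        simpa using this
      obtain ⟨y, hy, e⟩ := cone_exact (hcone 0 (by omega)) hx hd
      exact ⟨y, hy, by rw [e, sub_self]; exact Submodule.zero_mem _⟩)
    (by
      intro i j hij x hx hd
      exact ex_lemma hGG (hS _) (hS' _) (hSS _) (hcone (i + 1) (by omega)) (hcone' i (by omega))
        hx hd)
    (by
      intro i j hij x hx hd
      rcases Nat.eq_zero_or_pos j with rfl | hj
      · exact van_zero G G' _ _ (hS _) (hi _ (by omega)) x hx
      · exact van_of_shapiro G G' hGG _ _ (hSS _) (hS _) (hS' _) (hi _ (by omega))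
          (hii _ (by omega)) j (hR i j hij hj) x hx hd)
    (by
      intro x hx hd
      exact z_lemma hGG (hSS _) (hS _) (hS' _) (hi _ (by omega)) (hii _ (by omega))
        (hlen 1) h0 (hSS 0) (hf 0) (hf' 0) k hZ0 x hx hd)
    (fun i j c hc => dX_mem_AA (hf i) hc)
  intro x hx hdx
  obtain ⟨w, hw, hw2⟩ := main (single [] x) (single_mem_AA (hSS 0 h0) hx) (by
    rw [dG_single]
    exact single_UL_mem (hSS 0) le_rfl le_rfl h0 (fun h hh => rfl) hdx)
  refine ⟨w [], AA_apply hw [], ?_⟩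
  have e : x - bd (w []) = lapply (R := ℤ) [] (single [] x - dG w) := by
    simp [dG]
  rw [e]
  have hnil : ∀ s ∈ S 0, s = ([] : List P) := fun s hs =>
    List.length_eq_zero_iff.1 (hlen 0 s hs)
  refine map_UU_le (lapply []) ?_ ?_ (by simp) hw2
  · intro g hg s hs l h1 h2
    obtain rfl := hnil s hs
    rw [smul_nil', lapply_apply, lapply_apply, single_eq_same, single_eq_same]
    exact Submodule.mem_sup_left (trans_mem_Co hg (single_mem_LL h1 h2))
  · intro s hs l h1 h2
    obtain rfl := hnil s (hSS 0 hs)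
    rw [lapply_apply, single_eq_same]
    exact Submodule.mem_sup_right (single_mem_LL h1 h2)

end Simplices

end Part3

section Part4

open Finsupp

section GroupPart
variable {Γ : Type} [Group Γ]

noncomputable abbrev rt (g : Γ) : KK Γ →ₗ[ℤ] KK Γ := mapL (fun a => a * g)

lemma rt_rt (g h : Γ) (c : KK Γ) : rt g (rt h c) = rt (h * g) c := by
  rw [mapL_mapL]; simp only [mul_assoc]

lemma Co_mono {H G : Subgroup Γ} (h : H ≤ G) (j : ℕ) : Co H j ≤ Co G j := by
  intro c hc
  refine map_Co_le (LinearMap.id : KK Γ →ₗ[ℤ] _) ?_ ?_ hc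
  · intro g hg l h1 h2
    exact trans_mem_Co (h hg) (single_mem_LL h1 (fun a ha => h (h2 a ha)))
  · rintro rfl
    exact Submodule.subset_span (Or.inr ⟨rfl, rfl⟩)

lemma rt_Co {G : Subgroup Γ} {g : Γ} (hg : g ∈ G) {j : ℕ} {c : KK Γ} (hc : c ∈ Co G j) :
    rt g c ∈ Co G j := by
  refine map_Co_le (rt g) ?_ ?_ hc
  · intro h hh l h1 h2
    have : rt g (lt h (single l 1)) = lt h (rt g (single l 1)) := by
      rw [mapL_mapL, mapL_mapL]; simp only [mul_assoc]
    rw [this]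
    exact trans_mem_Co hh (mapL_mem (fun a ha => G.mul_mem ha hg) (single_mem_LL h1 h2))
  · rintro rfl
    refine Submodule.subset_span (Or.inr ⟨rfl, ?_⟩)
    simp

lemma prism_Co {G : Subgroup Γ} {g : Γ} (hg : g ∈ G) {j : ℕ} {c : KK Γ} (hc : c ∈ Co G j) :
    prism (fun a => a * g) c ∈ Co G (j + 1) := by
  refine map_Co_le (prism (fun a => a * g)) ?_ ?_ hc
  · intro h hh l h1 h2
    rw [mapL_single, prism_single, prism_single,
      ← mapL_prism (fun a => a * g) (fun a => a * g) (fun a => h * a) l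
        (fun a => mul_assoc _ _ _)]
    exact trans_mem_Co hh (prism0_mem _ (fun a ha => G.mul_mem ha hg) l j h1 h2)
  · intro _
    rw [prism_single]
    simp [prism0]

lemma prism_LL {G : Subgroup Γ} {g : Γ} (hg : g ∈ G) {j : ℕ} {c : KK Γ}
    (hc : c ∈ LL (G : Set Γ) j) : prism (fun a => a * g) c ∈ LL (G : Set Γ) (j + 1) := by
  refine map_LL_le (prism (fun a => a * g)) ?_ hc
  intro l h1 h2
  rw [prism_single]
  exact prism0_mem _ (fun a ha => G.mul_mem ha hg) l j h1 h2

/-- Relative chains supported on `H` die in the pair. -/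
theorem z0_abs {L : Type} [Group L] (η : L →* Γ) (G G' H H' : Subgroup Γ) (hH : H ≤ G)
    (hH' : H' ≤ G)
    (hη : ∀ l, η l ∈ G) (hcomm : ∀ l, ∀ h ∈ H', η l * h = h * η l) (s : L)
    (hs : s ∈ commutator L) (hconj : ∀ h ∈ H, η s * h * (η s)⁻¹ ∈ G') (hGG : G' ≤ G) (k : ℕ)
    (b : KK Γ) (hb : b ∈ LL (H : Set Γ) (k + 1)) (hdb : bd b ∈ UL H H' k) :
    ∃ w ∈ LL (G : Set Γ) (k + 2), b - bd w ∈ UL G G' (k + 1) := by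
  let M : Submodule ℤ (KK Γ) := (LL (G : Set Γ) (k + 2)).map bd ⊔ Co G (k + 1)
  have hbG : b ∈ LL (G : Set Γ) (k + 1) := LL_mono (by exact_mod_cast hH) _ hb
  have h1 : ∀ l, bd (b - rt (η l)⁻¹ b) ∈ Co G k := by
    intro l
    obtain ⟨c, hc, d, hd, e⟩ := Submodule.mem_sup.1 hdb
    have hc' := Co_mono hH _ hc
    rw [map_sub, bd_mapL, ← e, map_add]
    have t1 := rt_Co (G.inv_mem (hη l)) hc'
    have t2 : rt (η l)⁻¹ d = lt (η l)⁻¹ d := by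
      have : (rt (η l)⁻¹ - lt (η l)⁻¹) d ∈ (⊥ : Submodule ℤ (KK Γ)) := by
        refine map_LL_le _ ?_ hd
        intro m h1 h2
        rw [LinearMap.sub_apply, mapL_single, mapL_single]
        have : m.map (fun a => a * (η l)⁻¹) = m.map (fun a => (η l)⁻¹ * a) := by
          refine List.map_congr_left fun a ha => ?_
          rw [mul_inv_eq_iff_eq_mul, mul_assoc, ← hcomm l a (h2 a ha)]; simp
        rw [this, sub_self]
        exact Submodule.zero_mem _
      simpa [sub_eq_zero] using this
    have t3 := trans_mem_Co (G.inv_mem (hη l)) (LL_mono (G' := (G : Set Γ)) hH' _ hd)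
    have := Submodule.sub_mem _ (Submodule.sub_mem _ hc' t1) t3
    convert this using 1
    rw [t2]; abel
  let φ : L →* Multiplicative (KK Γ ⧸ M) :=
    { toFun := fun l => Multiplicative.ofAdd (M.mkQ (b - rt (η l)⁻¹ b))
      map_one' := by
        have : rt (1 : Γ) b = b := by
          have : rt (1 : Γ) = LinearMap.id := by
            refine Finsupp.lhom_ext' fun l => LinearMap.ext_ring ?_
            simp
          rw [this]; rfl
        rw [map_one, inv_one, this, sub_self, map_zero]; rfl
      map_mul' := by
        intro l l'
        rw [← ofAdd_add]
        congr 1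
        rw [← map_add, ← sub_eq_zero, ← map_sub]
        rw [Submodule.mkQ_apply, Submodule.Quotient.mk_eq_zero]
        set e := b - rt (η l')⁻¹ b with he
        have key : rt (η l)⁻¹ e - e ∈ M := by
          rw [← prism_formula]
          refine Submodule.add_mem _ (Submodule.mem_sup_left (Submodule.mem_map_of_mem ?_))
            (Submodule.mem_sup_right (prism_Co (G.inv_mem (hη l)) (h1 l')))
          refine prism_LL (G.inv_mem (hη l)) (Submodule.sub_mem _ hbG ?_)
          exact mapL_mem (fun a ha => G.mul_mem ha (G.inv_mem (hη l'))) hbG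
        convert key using 1
        rw [he, map_sub, rt_rt, map_mul, mul_inv_rev]
        abel }
  have h2 : φ s = 1 := Abelianization.commutator_subset_ker φ hs
  have h3 : b - rt (η s)⁻¹ b ∈ M := by
    have : M.mkQ (b - rt (η s)⁻¹ b) = 0 := h2
    rwa [Submodule.mkQ_apply, Submodule.Quotient.mk_eq_zero] at this
  obtain ⟨_, ⟨w, hw, rfl⟩, c, hc, e⟩ := Submodule.mem_sup.1 h3
  refine ⟨w, hw, ?_⟩
  have h4 : mapL (fun a => η s * a * (η s)⁻¹) b ∈ LL (G' : Set Γ) (k + 1) := mapL_mem hconj hb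
  have h5 := trans_mem_Co (G.inv_mem (hη s)) (LL_mono (G' := (G : Set Γ)) hGG _ h4)
  rw [mapL_mapL] at h5
  simp only [mul_assoc, inv_mul_cancel_left] at h4 h5
  have := Submodule.add_mem _ (Submodule.add_mem _ (Submodule.mem_sup_left hc)
    (Submodule.mem_sup_left h5)) (Submodule.mem_sup_right h4)
  change _ ∈ Co G (k + 1) ⊔ LL (G' : Set Γ) (k + 1)
  convert this using 1
  rw [eq_sub_of_add_eq e, rt]; abel

/-- base case -/
theorem base_abs (G G' : Subgroup Γ)
    (hG : ∀ g ∈ G, ∃ t ∈ commutator G, (t : Γ) * g ∈ G') : RelVan G G' 1 := by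
  let M : Submodule ℤ (KK Γ) := (LL (G : Set Γ) 3).map bd ⊔ Co G 2
  let φ : G →* Multiplicative (KK Γ ⧸ M) := MonoidHom.mk' 
    (fun g => Multiplicative.ofAdd (M.mkQ (single [1, (g : Γ)] 1))) (by
        intro g h
        rw [← ofAdd_add]
        congr 1
        rw [← map_add, ← sub_eq_zero, ← map_sub]
        rw [Submodule.mkQ_apply, Submodule.Quotient.mk_eq_zero]
        have t1 : bd (single [1, (g : Γ), g * h] 1) ∈ M :=
          Submodule.mem_sup_left (Submodule.mem_map_of_mem (single_mem_LL rfl (by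
            simp [G.one_mem, G.mul_mem])))
        have t2 : lt (g : Γ) (single [1, (h : Γ)] 1) - single [1, (h : Γ)] 1 ∈ M :=
          Submodule.mem_sup_right (trans_mem_Co g.2 (single_mem_LL rfl (by simp [G.one_mem])))
        have := Submodule.sub_mem _ t2 t1
        convert this using 1
        simp only [bd_single, bd0, mapL_single, map_sub, consL_single, map_zero, List.map_cons,
          List.map_nil, mul_one, Subgroup.coe_mul]
        abel)
  have hφ : ∀ g : G, single [1, (g : Γ)] 1 ∈ M ⊔ LL (G' : Set Γ) 2 := by
    intro g
    obtain ⟨t, ht, htg⟩ := hG g g.2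
    have h1 : φ t = 1 := Abelianization.commutator_subset_ker φ ht
    have h2 : φ g = φ (t * g) := by rw [map_mul, h1, one_mul]
    have h3 : M.mkQ (single [1, (g : Γ)] 1) = M.mkQ (single [1, ((t * g : G) : Γ)] 1) := h2
    rw [← sub_eq_zero, ← map_sub, Submodule.mkQ_apply, Submodule.Quotient.mk_eq_zero] at h3
    have := Submodule.add_mem _ (Submodule.mem_sup_left h3) (Submodule.mem_sup_right
      (single_mem_LL (G := (G' : Set Γ)) (l := [1, (t : Γ) * g]) rfl (by
        simp only [List.mem_cons, List.not_mem_nil, or_false, forall_eq_or_imp, forall_eq]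
        exact ⟨G'.one_mem, htg⟩)))
    rw [Subgroup.coe_mul, sub_add_cancel] at this
    exact this
  intro x hx _
  have : x ∈ M ⊔ LL (G' : Set Γ) 2 := by
    refine map_LL_le (LinearMap.id : KK Γ →ₗ[ℤ] _) ?_ hx
    intro l h1 h2
    obtain ⟨a, b, rfl⟩ := List.length_eq_two.1 h1
    have ha : a ∈ G := h2 a (by simp)
    have hb : b ∈ G := h2 b (by simp)
    have t1 := hφ ⟨a⁻¹ * b, G.mul_mem (G.inv_mem ha) hb⟩
    have t2 : lt a (single [1, a⁻¹ * b] 1) - single [1, a⁻¹ * b] 1 ∈ M :=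
      Submodule.mem_sup_right (trans_mem_Co ha (single_mem_LL rfl (by
        simp [G.one_mem, G.mul_mem (G.inv_mem ha) hb])))
    have := Submodule.add_mem _ t1 (Submodule.mem_sup_left t2)
    convert this using 1
    simp
  obtain ⟨m, hm, d, hd, rfl⟩ := Submodule.mem_sup.1 this
  obtain ⟨_, ⟨w, hw, rfl⟩, c, hc, rfl⟩ := Submodule.mem_sup.1 hm
  refine ⟨w, hw, ?_⟩
  have := Submodule.add_mem_sup hc hd
  rw [add_assoc, add_sub_cancel_left]
  exact this

end GroupPart

end Part4

section Part5

open Matrix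

section LinAlg
variable {N : ℕ} {D : Type} [Field D]

/-- a vector together with a covector -/
@[ext] structure Pr (N : ℕ) (D : Type) where
  v : Fin N → D
  f : Fin N → D

abbrev SLN (N : ℕ) (D : Type) [Field D] := Matrix.SpecialLinearGroup (Fin N) D

abbrev mx (g : SLN N D) : Matrix (Fin N) (Fin N) D := g.1

lemma mx_mul (g h : SLN N D) : mx (g * h) = mx g * mx h := rfl
lemma mx_one : mx (1 : SLN N D) = 1 := rfl
lemma mx_mul_inv (g : SLN N D) : mx g * mx g⁻¹ = 1 := by
  rw [← mx_mul, mul_inv_cancel, mx_one]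
lemma mx_inv_mul (g : SLN N D) : mx g⁻¹ * mx g = 1 := by
  rw [← mx_mul, inv_mul_cancel, mx_one]

instance prAct : MulAction (SLN N D) (Pr N D) where
  smul g x := ⟨mx g *ᵥ x.v, x.f ᵥ* mx g⁻¹⟩
  one_smul x := by
    change (⟨mx 1 *ᵥ x.v, x.f ᵥ* mx (1⁻¹)⟩ : Pr N D) = x
    simp [mx_one]
  mul_smul g h x := by
    change (⟨mx (g * h) *ᵥ x.v, x.f ᵥ* mx (g * h)⁻¹⟩ : Pr N D) =
      ⟨mx g *ᵥ (mx h *ᵥ x.v), (x.f ᵥ* mx h⁻¹) ᵥ* mx g⁻¹⟩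
    simp [_root_.mul_inv_rev, mx_mul, Matrix.mulVec_mulVec, Matrix.vecMul_vecMul]

lemma smul_v (g : SLN N D) (x : Pr N D) : (g • x).v = mx g *ᵥ x.v := rfl
lemma smul_f (g : SLN N D) (x : Pr N D) : (g • x).f = x.f ᵥ* mx g⁻¹ := rfl

lemma pair_smul (g : SLN N D) (x y : Pr N D) : (g • x).f ⬝ᵥ (g • y).v = x.f ⬝ᵥ y.v := by
  rw [smul_v, smul_f, Matrix.dotProduct_mulVec, Matrix.vecMul_vecMul, mx_inv_mul,
    Matrix.vecMul_one]

def perp (x y : Pr N D) : Prop := x.f ⬝ᵥ y.v = 0 ∧ y.f ⬝ᵥ x.v = 0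

def unit (x : Pr N D) : Prop := x.f ⬝ᵥ x.v = 1

lemma perp.symm {x y : Pr N D} (h : perp x y) : perp y x := ⟨h.2, h.1⟩

lemma perp_smul (g : SLN N D) {x y : Pr N D} : perp (g • x) (g • y) ↔ perp x y := by
  simp [perp, pair_smul]

lemma unit_smul (g : SLN N D) {x : Pr N D} : unit (g • x) ↔ unit x := by
  simp [unit, pair_smul]

def perpL (x : Pr N D) (τ : List (Pr N D)) : Prop := ∀ y ∈ τ, perp x y

/-- pointwise stabilizer -/
def Fx (τ : List (Pr N D)) : Subgroup (SLN N D) where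
  carrier := {g | ∀ x ∈ τ, g • x = x}
  mul_mem' := by
    intro a b ha hb x hx
    rw [mul_smul, hb x hx, ha x hx]
  one_mem' := fun x _ => one_smul _ x
  inv_mem' := by
    intro a ha x hx
    rw [inv_smul_eq_iff, ha x hx]

lemma mem_Fx {τ : List (Pr N D)} {g : SLN N D} : g ∈ Fx τ ↔ ∀ x ∈ τ, g • x = x := Iff.rfl

lemma list_fix {g : SLN N D} {σ : List (Pr N D)} : g • σ = σ ↔ ∀ x ∈ σ, g • x = x := by
  induction σ with
  | nil => simp
  | cons a σ ih => simp [ih]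

lemma mem_smul_list {g : SLN N D} {σ : List (Pr N D)} {x : Pr N D} :
    x ∈ g • σ ↔ ∃ y ∈ σ, g • y = x := by
  simp [smul_list]

lemma perpL_smul (g : SLN N D) {x : Pr N D} {τ : List (Pr N D)} :
    perpL (g • x) (g • τ) ↔ perpL x τ := by
  simp only [perpL, mem_smul_list]
  constructor
  · intro h y hy
    exact (perp_smul g).1 (h _ ⟨y, hy, rfl⟩)
  · rintro h _ ⟨y, hy, rfl⟩
    exact (perp_smul g).2 (h y hy)

lemma perpL_cons {x u : Pr N D} {τ : List (Pr N D)} : perpL x (u :: τ) ↔ perp x u ∧ perpL x τ := by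
  simp [perpL]

lemma perpL_append {x : Pr N D} {σ τ : List (Pr N D)} :
    perpL x (σ ++ τ) ↔ perpL x σ ∧ perpL x τ := by
  simp [perpL, or_imp, forall_and]

lemma rk_mulVec (u v w : Fin N → D) : vecMulVec u v *ᵥ w = (v ⬝ᵥ w) • u := by
  rw [Matrix.vecMulVec_mulVec]
  ext i
  simp [mul_comm]

/-- projection with kernel spanned by the vectors of `σ` and image the common kernel -/
structure IsProj (σ : List (Pr N D)) (π : Matrix (Fin N) (Fin N) D) : Prop where
  a : ∀ x ∈ σ, π *ᵥ x.v = 0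
  b : ∀ x ∈ σ, x.f ᵥ* π = 0
  c : ∀ w, (∀ x ∈ σ, x.f ⬝ᵥ w = 0) → π *ᵥ w = w
  d : ∀ h, (∀ x ∈ σ, h ⬝ᵥ x.v = 0) → h ᵥ* π = h

def ND (σ : List (Pr N D)) : Prop := ∃ π, IsProj σ π

lemma ND_nil : ND ([] : List (Pr N D)) := ⟨1, by constructor <;> simp⟩

lemma ND_congr {σ τ : List (Pr N D)} (h : ∀ x, x ∈ σ ↔ x ∈ τ) (hσ : ND σ) : ND τ := by
  obtain ⟨π, h1, h2, h3, h4⟩ := hσ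
  exact ⟨π, fun x hx => h1 x ((h x).2 hx), fun x hx => h2 x ((h x).2 hx),
    fun w hw => h3 w (fun x hx => hw x ((h x).1 hx)),
    fun w hw => h4 w (fun x hx => hw x ((h x).1 hx))⟩

lemma ND_cons {σ : List (Pr N D)} {π : Matrix (Fin N) (Fin N) D} (hπ : IsProj σ π) (x : Pr N D)
    (hx : x.f ⬝ᵥ (π *ᵥ x.v) ≠ 0) : ND (x :: σ) := by
  have hx' : (x.f ᵥ* π) ⬝ᵥ x.v ≠ 0 := by rwa [← Matrix.dotProduct_mulVec]
  refine ⟨π - (x.f ⬝ᵥ (π *ᵥ x.v))⁻¹ • vecMulVec (π *ᵥ x.v) (x.f ᵥ* π), ?_, ?_, ?_, ?_⟩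
  · intro y hy
    rw [Matrix.sub_mulVec, Matrix.smul_mulVec, rk_mulVec, ← Matrix.dotProduct_mulVec]
    rcases List.mem_cons.1 hy with rfl | hy
    · rw [smul_smul, inv_mul_cancel₀ hx, one_smul, sub_self]
    · simp [hπ.a y hy]
  · intro y hy
    rw [Matrix.vecMul_sub, Matrix.vecMul_smul, Matrix.vecMul_vecMulVec]
    rcases List.mem_cons.1 hy with rfl | hy
    · rw [smul_smul, inv_mul_cancel₀ hx, one_smul, sub_self]
    · simp [Matrix.dotProduct_mulVec, hπ.b y hy]
  · intro w hw
    have h1 := hπ.c w (fun y hy => hw y (List.mem_cons_of_mem _ hy))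
    have h2 := hw x (by simp)
    rw [Matrix.sub_mulVec, Matrix.smul_mulVec, rk_mulVec, ← Matrix.dotProduct_mulVec, h1, h2]
    simp
  · intro w hw
    have h1 := hπ.d w (fun y hy => hw y (List.mem_cons_of_mem _ hy))
    have h2 := hw x (by simp)
    rw [Matrix.vecMul_sub, Matrix.vecMul_smul, Matrix.vecMul_vecMulVec, Matrix.dotProduct_mulVec w,
      h1, h2]
    simp

lemma ND_unit {σ : List (Pr N D)} (hσ : ND σ) {u : Pr N D} (hu : perpL u σ) (h1 : unit u) :
    ND (u :: σ) := by
  obtain ⟨π, hπ⟩ := hσ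
  refine ND_cons hπ u ?_
  rw [hπ.c u.v (fun x hx => (hu x hx).2), h1]
  exact one_ne_zero

lemma ND_of_cons {σ : List (Pr N D)} {u : Pr N D} (hσ : ND (u :: σ)) (hu : perpL u σ)
    (h1 : unit u) : ND σ := by
  obtain ⟨π, hπ⟩ := hσ
  have a := hπ.a u (by simp)
  have b := hπ.b u (by simp)
  refine ⟨π + vecMulVec u.v u.f, ?_, ?_, ?_, ?_⟩
  · intro x hx
    rw [Matrix.add_mulVec, rk_mulVec, (hu x hx).1, hπ.a x (by simp [hx])]
    simp
  · intro x hx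
    rw [Matrix.vecMul_add, Matrix.vecMul_vecMulVec, (hu x hx).2, hπ.b x (by simp [hx])]
    simp
  · intro w hw
    have := hπ.c (w - (u.f ⬝ᵥ w) • u.v) (by
      intro x hx
      rw [dotProduct_sub, dotProduct_smul]
      rcases List.mem_cons.1 hx with rfl | hx
      · rw [h1]; simp
      · rw [hw x hx, (hu x hx).2]; simp)
    rw [Matrix.mulVec_sub, Matrix.mulVec_smul, a, smul_zero, sub_zero] at this
    rw [Matrix.add_mulVec, rk_mulVec, this, sub_add_cancel]
  · intro w hw
    have := hπ.d (w - (w ⬝ᵥ u.v) • u.f) (by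
      intro x hx
      rw [sub_dotProduct, smul_dotProduct]
      rcases List.mem_cons.1 hx with rfl | hx
      · rw [h1]; simp
      · rw [hw x hx, (hu x hx).1]; simp)
    rw [Matrix.sub_vecMul, Matrix.smul_vecMul, b, smul_zero, sub_zero] at this
    rw [Matrix.vecMul_add, Matrix.vecMul_vecMulVec, this, sub_add_cancel]

lemma ND_smul' (g : SLN N D) {σ : List (Pr N D)} (h : ND σ) : ND (g • σ) := by
  obtain ⟨π, hπ⟩ := h
  refine ⟨mx g * π * mx g⁻¹, ?_, ?_, ?_, ?_⟩
  · intro x hx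
    obtain ⟨y, hy, rfl⟩ := mem_smul_list.1 hx
    rw [smul_v, Matrix.mulVec_mulVec, Matrix.mul_assoc, mx_inv_mul, Matrix.mul_one,
      ← Matrix.mulVec_mulVec, hπ.a y hy, Matrix.mulVec_zero]
  · intro x hx
    obtain ⟨y, hy, rfl⟩ := mem_smul_list.1 hx
    rw [smul_f, Matrix.vecMul_vecMul, ← Matrix.mul_assoc, ← Matrix.mul_assoc, mx_inv_mul,
      Matrix.one_mul, ← Matrix.vecMul_vecMul, hπ.b y hy, Matrix.zero_vecMul]
  · intro w hw
    have := hπ.c (mx g⁻¹ *ᵥ w) (by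
      intro x hx
      have := hw (g • x) (mem_smul_list.2 ⟨x, hx, rfl⟩)
      rwa [smul_f, ← Matrix.dotProduct_mulVec] at this)
    rw [← Matrix.mulVec_mulVec, ← Matrix.mulVec_mulVec, this, Matrix.mulVec_mulVec, mx_mul_inv,
      Matrix.one_mulVec]
  · intro w hw
    have := hπ.d (w ᵥ* mx g) (by
      intro x hx
      have := hw (g • x) (mem_smul_list.2 ⟨x, hx, rfl⟩)
      rwa [smul_v, Matrix.dotProduct_mulVec] at this)
    rw [← Matrix.vecMul_vecMul, ← Matrix.vecMul_vecMul, this, Matrix.vecMul_vecMul, mx_mul_inv,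
      Matrix.vecMul_one]

/-- duality -/
lemma dual_f {σ : List (Pr N D)} (h : ND σ) {w : Fin N → D} (hw : ∀ x ∈ σ, x.f ⬝ᵥ w = 0)
    (hw0 : w ≠ 0) : ∃ f : Fin N → D, (∀ x ∈ σ, f ⬝ᵥ x.v = 0) ∧ f ⬝ᵥ w = 1 := by
  obtain ⟨π, hπ⟩ := h
  obtain ⟨i, hi⟩ := Function.ne_iff.1 hw0
  refine ⟨(w i)⁻¹ • (Pi.single i 1 ᵥ* π), ?_, ?_⟩
  · intro x hx
    rw [smul_dotProduct, ← Matrix.dotProduct_mulVec, hπ.a x hx]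
    simp
  · rw [smul_dotProduct, ← Matrix.dotProduct_mulVec, hπ.c w hw, single_dotProduct, one_mul]
    exact inv_mul_cancel₀ hi

lemma dual_v {σ : List (Pr N D)} (h : ND σ) {w : Fin N → D} (hw : ∀ x ∈ σ, w ⬝ᵥ x.v = 0)
    (hw0 : w ≠ 0) : ∃ f : Fin N → D, (∀ x ∈ σ, x.f ⬝ᵥ f = 0) ∧ w ⬝ᵥ f = 1 := by
  obtain ⟨π, hπ⟩ := h
  obtain ⟨i, hi⟩ := Function.ne_iff.1 hw0
  refine ⟨(w i)⁻¹ • (π *ᵥ Pi.single i 1), ?_, ?_⟩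
  · intro x hx
    rw [dotProduct_smul, Matrix.dotProduct_mulVec, hπ.b x hx]
    simp
  · rw [dotProduct_smul, Matrix.dotProduct_mulVec, hπ.d w hw, dotProduct_single, mul_one]
    exact inv_mul_cancel₀ hi

lemma exists_perp {σ : List (Pr N D)} (h : ND σ) (hl : σ.length < N) :
    ∃ x : Pr N D, perpL x σ ∧ unit x := by
  let F : (Fin N → D) →ₗ[D] (Fin σ.length → D) :=
    Matrix.mulVecLin (Matrix.of fun i : Fin σ.length => (σ.get i).f)
  have hF : LinearMap.ker F ≠ ⊥ := F.ker_ne_bot_of_finrank_lt (by simpa using hl)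
  obtain ⟨w, hw, hw0⟩ := Submodule.exists_mem_ne_zero_of_ne_bot hF
  have hw' : ∀ x ∈ σ, x.f ⬝ᵥ w = 0 := by
    intro x hx
    obtain ⟨i, rfl⟩ := List.get_of_mem hx
    exact congrFun (LinearMap.mem_ker.1 hw) i
  obtain ⟨f, hf1, hf2⟩ := dual_f h hw' hw0
  exact ⟨⟨w, f⟩, fun y hy => ⟨hf1 y hy, hw' y hy⟩, hf2⟩

/-- simplices -/
def XX (τ : List (Pr N D)) (i : ℕ) : Set (List (Pr N D)) :=
  {σ | σ.length = i ∧ (∀ x ∈ σ, perpL x τ ∧ unit x) ∧ ∀ σ' : List (Pr N D), σ'.Sublist σ →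
    ND (σ' ++ τ)}

lemma XX_face {τ : List (Pr N D)} {i : ℕ} {s t : List (Pr N D)} (hs : s ∈ XX τ (i + 1))
    (ht : t.Sublist s) (hl : t.length + 1 = s.length) : t ∈ XX τ i := by
  refine ⟨?_, fun x hx => hs.2.1 x (ht.subset hx), fun σ' h => hs.2.2 σ' (h.trans ht)⟩
  have := hs.1
  omega

lemma XX_smul {τ : List (Pr N D)} {i : ℕ} {s : List (Pr N D)} (hs : s ∈ XX τ i)
    {g : SLN N D} (hg : g ∈ Fx τ) : g • s ∈ XX τ i := by
  have hτ : g • τ = τ := list_fix.2 hg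
  refine ⟨by rw [length_smul', hs.1], ?_, ?_⟩
  · intro x hx
    obtain ⟨y, hy, rfl⟩ := mem_smul_list.1 hx
    refine ⟨?_, (unit_smul g).2 (hs.2.1 y hy).2⟩
    rw [← hτ]
    exact (perpL_smul g).2 (hs.2.1 y hy).1
  · intro σ' h
    obtain ⟨l, hl, rfl⟩ := List.sublist_map_iff.1 h
    rw [← smul_list]
    have e : g • l ++ τ = g • (l ++ τ) := by rw [smul_append', hτ]
    rw [e]
    exact ND_smul' g (hs.2.2 l hl)

lemma ND_mid {σ τ : List (Pr N D)} {u : Pr N D} (hu : perpL u τ) (hσ : ∀ x ∈ σ, perp x u)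
    (h1 : unit u) : ND (σ ++ u :: τ) ↔ ND (σ ++ τ) := by
  have hp : perpL u (σ ++ τ) := perpL_append.2 ⟨fun x hx => (hσ x hx).symm, hu⟩
  have hc : ∀ x, x ∈ σ ++ u :: τ ↔ x ∈ u :: (σ ++ τ) := by
    intro x; simp; tauto
  constructor
  · intro h
    exact ND_of_cons (ND_congr hc h) hp h1
  · intro h
    exact ND_congr (fun x => (hc x).symm) (ND_unit h hp h1)

lemma XX_cons {τ : List (Pr N D)} {u : Pr N D} (hu : perpL u τ) (h1 : unit u) {i : ℕ}
    {s : List (Pr N D)} : s ∈ XX (u :: τ) i ↔ s ∈ XX τ i ∧ ∀ x ∈ s, perp x u := by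
  constructor
  · rintro ⟨h2, h3, h4⟩
    have h5 : ∀ x ∈ s, perp x u := fun x hx => (perpL_cons.1 (h3 x hx).1).1
    exact ⟨⟨h2, fun x hx => ⟨(perpL_cons.1 (h3 x hx).1).2, (h3 x hx).2⟩,
      fun σ' h => (ND_mid hu (fun x hx => h5 x (h.subset hx)) h1).1 (h4 σ' h)⟩, h5⟩
  · rintro ⟨⟨h2, h3, h4⟩, h5⟩
    exact ⟨h2, fun x hx => ⟨perpL_cons.2 ⟨h5 x hx, (h3 x hx).1⟩, (h3 x hx).2⟩,
      fun σ' h => (ND_mid hu (fun x hx => h5 x (h.subset hx)) h1).2 (h4 σ' h)⟩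

lemma generic [Infinite D] (τ : List (Pr N D)) (A : Finset (Matrix (Fin N) (Fin N) D))
    (hA : ∀ B ∈ A, ∃ y : Pr N D, perpL y τ ∧ y.f ⬝ᵥ (B *ᵥ y.v) ≠ 0) :
    ∃ y : Pr N D, perpL y τ ∧ ∀ B ∈ A, y.f ⬝ᵥ (B *ᵥ y.v) ≠ 0 := by
  classical
  induction A using Finset.induction_on with
  | empty => exact ⟨⟨0, 0⟩, fun x _ => by simp [perp], by simp⟩
  | insert B A _ ih =>
    obtain ⟨y, hy, hy2⟩ := ih (fun C hC => hA C (Finset.mem_insert_of_mem hC))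
    obtain ⟨z, hz, hz2⟩ := hA B (Finset.mem_insert_self _ _)
    let pt : D → Pr N D := fun t => ⟨y.v + t • (z.v - y.v), y.f + t • (z.f - y.f)⟩
    have hpt : ∀ t, perpL (pt t) τ := by
      intro t x hx
      have h1 := hy x hx
      have h2 := hz x hx
      constructor
      · simp [pt, h1.1, h2.1]
      · simp [pt, h1.2, h2.2]
    let p : Matrix (Fin N) (Fin N) D → Polynomial D := fun C =>
      Polynomial.C (y.f ⬝ᵥ (C *ᵥ y.v)) +
      Polynomial.X * Polynomial.C (y.f ⬝ᵥ (C *ᵥ (z.v - y.v)) + (z.f - y.f) ⬝ᵥ (C *ᵥ y.v)) +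
      Polynomial.X ^ 2 * Polynomial.C ((z.f - y.f) ⬝ᵥ (C *ᵥ (z.v - y.v)))
    have hp : ∀ C t, (p C).eval t = (pt t).f ⬝ᵥ (C *ᵥ (pt t).v) := by
      intro C t
      simp only [p, pt, Polynomial.eval_add, Polynomial.eval_mul, Polynomial.eval_C,
        Polynomial.eval_X, Polynomial.eval_pow, Matrix.mulVec_add, Matrix.mulVec_smul,
        dotProduct_add, add_dotProduct, smul_dotProduct, dotProduct_smul, smul_eq_mul]
      ring
    have hne : ∏ C ∈ insert B A, p C ≠ 0 := by
      rw [Finset.prod_ne_zero_iff]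
      intro C hC h0
      rcases Finset.mem_insert.1 hC with rfl | hC
      · have := hp C 1
        rw [h0] at this
        apply hz2
        simpa [pt] using this.symm
      · have := hp C 0
        rw [h0] at this
        apply hy2 C hC
        simpa [pt] using this.symm
    obtain ⟨t, ht⟩ : ∃ t, (∏ C ∈ insert B A, p C).eval t ≠ 0 := by
      by_contra hcon
      push Not at hcon
      exact hne (Polynomial.funext (fun t => by rw [hcon t]; simp))
    rw [Polynomial.eval_prod, Finset.prod_ne_zero_iff] at ht
    refine ⟨pt t, hpt t, fun C hC => ?_⟩
    rw [← hp]
    exact ht C hC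

lemma cone_exists [Infinite D] {τ : List (Pr N D)} (hτ : ND τ) {i : ℕ} (hi : i + τ.length < N)
    (T : Finset (List (Pr N D))) (hT : ∀ s ∈ T, s ∈ XX τ i) :
    ∃ p, ∀ s ∈ T, p :: s ∈ XX τ (i + 1) := by
  classical
  let pj : List (Pr N D) → Matrix (Fin N) (Fin N) D := fun σ =>
    if h : ND σ then h.choose else 1
  have hpj : ∀ σ, ND σ → IsProj σ (pj σ) := by
    intro σ h
    simp only [pj, dif_pos h]
    exact h.choose_spec
  let A : Finset (Matrix (Fin N) (Fin N) D) :=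
    insert 1 (T.biUnion fun s => s.sublists.toFinset.image fun σ' => pj (σ' ++ τ))
  obtain ⟨y, hy, hyA⟩ := generic τ A (by
    intro B hB
    rcases Finset.mem_insert.1 hB with rfl | hB
    · obtain ⟨x, hx, hx1⟩ := exists_perp hτ (by omega)
      refine ⟨x, hx, ?_⟩
      rw [Matrix.one_mulVec, hx1]
      exact one_ne_zero
    · simp only [Finset.mem_biUnion, Finset.mem_image, List.mem_toFinset, List.mem_sublists] at hB
      obtain ⟨s, hs, σ', hσ', rfl⟩ := hB
      have hnd := (hT s hs).2.2 σ' hσ'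
      obtain ⟨x, hx, hx1⟩ := exists_perp hnd (by
        have := hσ'.length_le
        have := (hT s hs).1
        rw [List.length_append]; omega)
      refine ⟨x, (perpL_append.1 hx).2, ?_⟩
      rw [(hpj _ hnd).c x.v (fun z hz => (hx z hz).2), hx1]
      exact one_ne_zero)
  have hc : y.f ⬝ᵥ y.v ≠ 0 := by
    have := hyA 1 (Finset.mem_insert_self _ _)
    rwa [Matrix.one_mulVec] at this
  refine ⟨⟨y.v, (y.f ⬝ᵥ y.v)⁻¹ • y.f⟩, ?_⟩
  have hp : perpL (⟨y.v, (y.f ⬝ᵥ y.v)⁻¹ • y.f⟩ : Pr N D) τ := by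
    intro x hx
    refine ⟨?_, (hy x hx).2⟩
    rw [smul_dotProduct, (hy x hx).1, smul_zero]
  have hu : unit (⟨y.v, (y.f ⬝ᵥ y.v)⁻¹ • y.f⟩ : Pr N D) := by
    change ((y.f ⬝ᵥ y.v)⁻¹ • y.f) ⬝ᵥ y.v = 1
    rw [smul_dotProduct, smul_eq_mul, inv_mul_cancel₀ hc]
  intro s hs
  refine ⟨by simp [(hT s hs).1], ?_, ?_⟩
  · intro x hx
    rcases List.mem_cons.1 hx with rfl | hx
    · exact ⟨hp, hu⟩
    · exact (hT s hs).2.1 x hx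
  · intro σ' hσ'
    rcases List.sublist_cons_iff.1 hσ' with h | ⟨r, rfl, h⟩
    · exact (hT s hs).2.2 σ' h
    · rw [List.cons_append]
      refine ND_cons (hpj _ ((hT s hs).2.2 r h)) _ ?_
      have := hyA (pj (r ++ τ)) (Finset.mem_insert_of_mem (by
        simp only [Finset.mem_biUnion, Finset.mem_image, List.mem_toFinset, List.mem_sublists]
        exact ⟨s, hs, r, h, rfl⟩))
      change ((y.f ⬝ᵥ y.v)⁻¹ • y.f) ⬝ᵥ _ ≠ 0
      rw [smul_dotProduct, smul_eq_mul]
      exact mul_ne_zero (inv_ne_zero hc) this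

end LinAlg

end Part5

section Part6

open Matrix

section Eta
variable {N : ℕ} {D : Type} [Field D]

def Um (x0 x1 : Pr N D) : Matrix (Fin N) (Fin 2) D := Matrix.of fun i j => (![x0.v, x1.v] j) i
def Vm (x0 x1 : Pr N D) : Matrix (Fin 2) (Fin N) D := Matrix.of ![x0.f, x1.f]

lemma VU {x0 x1 : Pr N D} (h0 : unit x0) (h1 : unit x1) (hp : perp x0 x1) :
    Vm x0 x1 * Um x0 x1 = 1 := by
  ext i j
  fin_cases i <;> fin_cases j
  · exact h0
  · exact hp.1
  · exact hp.2
  · exact h1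

def etaM (x0 x1 : Pr N D) (A : Matrix (Fin 2) (Fin 2) D) : Matrix (Fin N) (Fin N) D :=
  1 + Um x0 x1 * (A - 1) * Vm x0 x1

lemma etaM_one (x0 x1 : Pr N D) : etaM x0 x1 1 = 1 := by simp [etaM]

lemma etaM_U {x0 x1 : Pr N D} (h : Vm x0 x1 * Um x0 x1 = 1) (A : Matrix (Fin 2) (Fin 2) D) :
    etaM x0 x1 A * Um x0 x1 = Um x0 x1 * A := by
  rw [etaM, Matrix.add_mul, Matrix.one_mul, Matrix.mul_assoc, h, Matrix.mul_one, Matrix.mul_sub,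
    Matrix.mul_one]
  abel

lemma V_etaM {x0 x1 : Pr N D} (h : Vm x0 x1 * Um x0 x1 = 1) (A : Matrix (Fin 2) (Fin 2) D) :
    Vm x0 x1 * etaM x0 x1 A = A * Vm x0 x1 := by
  rw [etaM, Matrix.mul_add, Matrix.mul_one, Matrix.mul_assoc, ← Matrix.mul_assoc, h,
    Matrix.one_mul, Matrix.sub_mul, Matrix.one_mul]
  abel

lemma etaM_mul {x0 x1 : Pr N D} (h : Vm x0 x1 * Um x0 x1 = 1) (A B : Matrix (Fin 2) (Fin 2) D) :
    etaM x0 x1 (A * B) = etaM x0 x1 A * etaM x0 x1 B := by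
  conv_rhs => rw [etaM.eq_def x0 x1 A, Matrix.add_mul, Matrix.one_mul, Matrix.mul_assoc, V_etaM h]
  rw [etaM, etaM, add_assoc, Matrix.mul_assoc, Matrix.mul_assoc, Matrix.mul_assoc,
    ← Matrix.mul_add]
  congr 2
  rw [← Matrix.mul_assoc, ← Matrix.add_mul]
  congr 1
  rw [Matrix.sub_mul, Matrix.one_mul]
  abel

def eta (x0 x1 : Pr N D) (h : Vm x0 x1 * Um x0 x1 = 1) :
    Matrix.SpecialLinearGroup (Fin 2) D →* SLN N D where
  toFun A := ⟨etaM x0 x1 A.1, by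
    rw [etaM, Matrix.mul_assoc, Matrix.det_one_add_mul_comm, Matrix.mul_assoc, h, Matrix.mul_one,
      add_sub_cancel, A.2]⟩
  map_one' := Subtype.ext (etaM_one x0 x1)
  map_mul' A B := Subtype.ext (etaM_mul h A.1 B.1)

lemma mx_eta (x0 x1 : Pr N D) (h : Vm x0 x1 * Um x0 x1 = 1)
    (A : Matrix.SpecialLinearGroup (Fin 2) D) : mx (eta x0 x1 h A) = etaM x0 x1 A.1 := rfl

lemma mx_eta_inv (x0 x1 : Pr N D) (h : Vm x0 x1 * Um x0 x1 = 1)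
    (A : Matrix.SpecialLinearGroup (Fin 2) D) :
    mx (eta x0 x1 h A)⁻¹ = etaM x0 x1 (A⁻¹).1 := by
  rw [← map_inv]; rfl

lemma eta_fix {x0 x1 : Pr N D} (h : Vm x0 x1 * Um x0 x1 = 1) {z : Pr N D} (h0 : perp z x0)
    (h1 : perp z x1) (A : Matrix.SpecialLinearGroup (Fin 2) D) : eta x0 x1 h A • z = z := by
  have hv : Vm x0 x1 *ᵥ z.v = 0 := by
    ext i
    fin_cases i
    · exact h0.2
    · exact h1.2
  have hu : z.f ᵥ* Um x0 x1 = 0 := by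
    ext i
    fin_cases i
    · exact h0.1
    · exact h1.1
  apply Pr.ext
  · rw [smul_v, mx_eta, etaM, Matrix.add_mulVec, ← Matrix.mulVec_mulVec, hv]
    simp
  · rw [smul_f, mx_eta_inv, etaM, Matrix.vecMul_add, Matrix.mul_assoc, ← Matrix.vecMul_vecMul, hu]
    simp

lemma eta_comm {x0 x1 : Pr N D} (h : Vm x0 x1 * Um x0 x1 = 1) {g : SLN N D}
    (h0 : g • x0 = x0) (h1 : g • x1 = x1)
    (A : Matrix.SpecialLinearGroup (Fin 2) D) : eta x0 x1 h A * g = g * eta x0 x1 h A := by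
  have hU : mx g * Um x0 x1 = Um x0 x1 := by
    ext i j
    fin_cases j
    · exact congrFun (congrArg Pr.v h0) i
    · exact congrFun (congrArg Pr.v h1) i
  have hV' : Vm x0 x1 * mx g⁻¹ = Vm x0 x1 := by
    ext i j
    fin_cases i
    · exact congrFun (congrArg Pr.f h0) j
    · exact congrFun (congrArg Pr.f h1) j
  have hV : Vm x0 x1 * mx g = Vm x0 x1 := by
    conv_lhs => rw [← hV']
    rw [Matrix.mul_assoc, mx_inv_mul, Matrix.mul_one]
  apply Subtype.ext
  change mx (eta x0 x1 h A * g) = mx (g * eta x0 x1 h A)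
  rw [mx_mul, mx_mul, mx_eta, etaM, Matrix.add_mul, Matrix.mul_add, Matrix.mul_assoc _ _ (mx g), hV,
    ← Matrix.mul_assoc (mx g), ← Matrix.mul_assoc (mx g), hU]
  simp

/-- elementary matrices of size two -/
def E12 (t : D) : Matrix.SpecialLinearGroup (Fin 2) D := ⟨!![1, t; 0, 1], by simp [Matrix.det_fin_two]⟩
def E21 (t : D) : Matrix.SpecialLinearGroup (Fin 2) D := ⟨!![1, 0; t, 1], by simp [Matrix.det_fin_two]⟩
def Dg (l : D) (hl : l ≠ 0) : Matrix.SpecialLinearGroup (Fin 2) D :=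
  ⟨!![l, 0; 0, l⁻¹], by simp [Matrix.det_fin_two, hl]⟩

lemma exists_lam (D : Type) [Field D] [Infinite D] : ∃ l : D, l ≠ 0 ∧ l ^ 2 - 1 ≠ 0 := by
  classical
  obtain ⟨l, hl⟩ := Infinite.exists_notMem_finset ({0, 1, -1} : Finset D)
  simp only [Finset.mem_insert, Finset.mem_singleton, not_or] at hl
  refine ⟨l, hl.1, ?_⟩
  have : l ^ 2 - 1 = (l - 1) * (l + 1) := by ring
  rw [this]
  exact mul_ne_zero (sub_ne_zero.2 hl.2.1) (by rw [← sub_neg_eq_add]; exact sub_ne_zero.2 hl.2.2)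

lemma com_of {L : Type*} [Group L] {x a b : L} (h : x * b * a = a * b) : x ∈ commutator L := by
  have : x = a * b * a⁻¹ * b⁻¹ := by rw [← h]; group
  rw [this]
  exact Subgroup.commutator_mem_commutator (Subgroup.mem_top a) (Subgroup.mem_top b)

lemma E12_comm [Infinite D] (t : D) : E12 t ∈ commutator (Matrix.SpecialLinearGroup (Fin 2) D) := by
  obtain ⟨l, hl, hl2⟩ := exists_lam D
  refine com_of (a := Dg l hl) (b := E12 (t / (l ^ 2 - 1))) (Subtype.ext ?_)
  change !![1, t; 0, 1] * !![1, t / (l ^ 2 - 1); 0, 1] * !![l, 0; 0, l⁻¹] =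
    !![l, 0; 0, l⁻¹] * !![1, t / (l ^ 2 - 1); 0, 1]
  have : (t / (l ^ 2 - 1) + t) * l⁻¹ = l * (t / (l ^ 2 - 1)) := by field_simp; ring
  simp [Matrix.mul_fin_two, this]

lemma E21_comm [Infinite D] (t : D) : E21 t ∈ commutator (Matrix.SpecialLinearGroup (Fin 2) D) := by
  obtain ⟨l, hl, hl2⟩ := exists_lam D
  refine com_of (a := Dg l⁻¹ (inv_ne_zero hl)) (b := E21 (t / (l ^ 2 - 1))) (Subtype.ext ?_)
  change !![1, 0; t, 1] * !![1, 0; t / (l ^ 2 - 1), 1] * !![l⁻¹, 0; 0, l⁻¹⁻¹] =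
    !![l⁻¹, 0; 0, l⁻¹⁻¹] * !![1, 0; t / (l ^ 2 - 1), 1]
  have : (t + t / (l ^ 2 - 1)) * l⁻¹ = l * (t / (l ^ 2 - 1)) := by field_simp; ring
  simp [Matrix.mul_fin_two, this]

def wS (D : Type) [Field D] : Matrix.SpecialLinearGroup (Fin 2) D := E12 (-1) * E21 1 * E12 (-1)

lemma wS_comm [Infinite D] : wS D ∈ commutator (Matrix.SpecialLinearGroup (Fin 2) D) :=
  mul_mem (mul_mem (E12_comm _) (E21_comm _)) (E12_comm _)

lemma wS_val : (wS D).1 = !![0, -1; 1, 0] := by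
  change !![1, -1; 0, 1] * !![1, 0; 1, 1] * !![1, -1; 0, 1] = _
  simp [Matrix.mul_fin_two]

lemma wS_inv_val : ((wS D)⁻¹).1 = !![0, 1; -1, 0] := by
  change (wS D).1.adjugate = _
  rw [wS_val, Matrix.adjugate_fin_two_of]
  simp

lemma eta_wS {x0 x1 : Pr N D} (h : Vm x0 x1 * Um x0 x1 = 1) : eta x0 x1 h (wS D) • x0 = x1 := by
  apply Pr.ext
  · have := etaM_U h (wS D).1
    ext i
    have := congrFun (congrFun this i) 0
    refine Eq.trans this ?_
    rw [wS_val]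
    simp [Matrix.mul_apply, Fin.sum_univ_two, Um]
  · have := V_etaM h ((wS D)⁻¹).1
    ext i
    have := congrFun (congrFun this 0) i
    rw [smul_f, mx_eta_inv]
    refine Eq.trans this ?_
    rw [wS_inv_val]
    simp [Matrix.mul_apply, Fin.sum_univ_two, Vm]

lemma eta_E12 {x0 x1 : Pr N D} (t : D) :
    etaM x0 x1 (E12 t).1 = 1 + t • vecMulVec x0.v x1.f := by
  rw [etaM]
  congr 1
  ext i j
  simp [Matrix.mul_apply, Fin.sum_univ_two, Um, Vm, E12, vecMulVec_apply, Matrix.one_apply]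
  ring

/-- commutator subgroup of the pointwise stabilizer, as a subgroup -/
def Com (σ : List (Pr N D)) : Subgroup (SLN N D) := (commutator (Fx σ)).map (Fx σ).subtype

lemma Com_le (σ : List (Pr N D)) : Com σ ≤ Fx σ := by
  rintro _ ⟨x, _, rfl⟩
  exact x.2

lemma eta_Com {σ : List (Pr N D)} {x0 x1 : Pr N D} (h : Vm x0 x1 * Um x0 x1 = 1)
    (h0 : perpL x0 σ) (h1 : perpL x1 σ) {A : Matrix.SpecialLinearGroup (Fin 2) D}
    (hA : A ∈ commutator (Matrix.SpecialLinearGroup (Fin 2) D)) : eta x0 x1 h A ∈ Com σ := by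
  let e : Matrix.SpecialLinearGroup (Fin 2) D →* Fx σ := (eta x0 x1 h).codRestrict (Fx σ)
    (fun A z hz => eta_fix h (h0 z hz).symm (h1 z hz).symm A)
  refine ⟨e A, ?_, rfl⟩
  have : (commutator (Matrix.SpecialLinearGroup (Fin 2) D)).map e ≤ commutator (Fx σ) := by
    rw [commutator_def, commutator_def, Subgroup.map_commutator]
    exact Subgroup.commutator_mono le_top le_top
  exact this ⟨A, hA, rfl⟩

lemma transv [Infinite D] {σ : List (Pr N D)} (hσ : ND σ) {a ψ : Fin N → D}
    (ha : ∀ x ∈ σ, x.f ⬝ᵥ a = 0) (hψ : ∀ x ∈ σ, ψ ⬝ᵥ x.v = 0) (h : ψ ⬝ᵥ a = 0) :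
    ∃ g ∈ Com σ, mx g = 1 + vecMulVec a ψ ∧ mx g⁻¹ = 1 - vecMulVec a ψ := by
  by_cases ha0 : a = 0
  · exact ⟨1, one_mem _, by simp [ha0, mx_one], by simp [ha0, mx_one]⟩
  by_cases hψ0 : ψ = 0
  · exact ⟨1, one_mem _, by simp [hψ0, mx_one], by simp [hψ0, mx_one]⟩
  obtain ⟨c, hc, hc1⟩ := dual_v hσ hψ hψ0
  obtain ⟨α, hα, hα1⟩ := dual_f hσ ha ha0
  let x0 : Pr N D := ⟨a, α - (α ⬝ᵥ c) • ψ⟩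
  let x1 : Pr N D := ⟨c, ψ⟩
  have e0 : unit x0 := by
    change (α - (α ⬝ᵥ c) • ψ) ⬝ᵥ a = 1
    rw [sub_dotProduct, smul_dotProduct, h, hα1]; simp
  have e01 : perp x0 x1 := by
    refine ⟨?_, h⟩
    change (α - (α ⬝ᵥ c) • ψ) ⬝ᵥ c = 0
    rw [sub_dotProduct, smul_dotProduct, hc1]; simp
  have hVU := VU e0 (show unit x1 from hc1) e01
  have p0 : perpL x0 σ := by
    intro x hx
    refine ⟨?_, ha x hx⟩
    change (α - (α ⬝ᵥ c) • ψ) ⬝ᵥ x.v = 0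
    rw [sub_dotProduct, smul_dotProduct, hα x hx, hψ x hx]; simp
  have p1 : perpL x1 σ := fun x hx => ⟨hψ x hx, hc x hx⟩
  refine ⟨eta x0 x1 hVU (E12 1), eta_Com hVU p0 p1 (E12_comm 1), ?_, ?_⟩
  · rw [mx_eta, eta_E12, one_smul]
  · have : (E12 (1 : D))⁻¹ = E12 (-1) := by
      apply Subtype.ext
      change (!![1, 1; 0, 1] : Matrix (Fin 2) (Fin 2) D).adjugate = !![1, -1; 0, 1]
      simp [Matrix.adjugate_fin_two_of]
    rw [mx_eta_inv, this, eta_E12, neg_smul, one_smul, sub_eq_add_neg]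

variable [Infinite D]

lemma move_f {σ : List (Pr N D)} (hσ : ND σ) {v f f' : Fin N → D}
    (h : perpL ⟨v, f⟩ σ) (h' : perpL ⟨v, f'⟩ σ) (h1 : f ⬝ᵥ v = 1) (h1' : f' ⬝ᵥ v = 1) :
    ∃ g ∈ Com σ, g • (⟨v, f⟩ : Pr N D) = ⟨v, f'⟩ := by
  obtain ⟨g, hg, e1, e2⟩ := transv hσ (a := v) (ψ := f - f') (fun x hx => (h x hx).2)
    (fun x hx => by
      rw [sub_dotProduct]
      have a := (h x hx).1
      have b := (h' x hx).1
      dsimp only at a b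
      rw [a, b, sub_zero])
    (by rw [sub_dotProduct, h1, h1', sub_self])
  refine ⟨g, hg, Pr.ext ?_ ?_⟩
  · rw [smul_v, e1, Matrix.add_mulVec, rk_mulVec, sub_dotProduct, h1, h1']
    simp
  · rw [smul_f, e2, Matrix.vecMul_sub, Matrix.vecMul_vecMulVec]
    simp [h1]

lemma move_v {σ : List (Pr N D)} (hσ : ND σ) {v v' f : Fin N → D}
    (h : perpL ⟨v, f⟩ σ) (h' : perpL ⟨v', f⟩ σ) (h1 : f ⬝ᵥ v = 1) (h1' : f ⬝ᵥ v' = 1) :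
    ∃ g ∈ Com σ, g • (⟨v, f⟩ : Pr N D) = ⟨v', f⟩ := by
  obtain ⟨g, hg, e1, e2⟩ := transv hσ (a := v' - v) (ψ := f)
    (fun x hx => by
      rw [dotProduct_sub]
      have a := (h x hx).2
      have b := (h' x hx).2
      dsimp only at a b
      rw [a, b, sub_zero])
    (fun x hx => (h x hx).1)
    (by rw [dotProduct_sub, h1, h1', sub_self])
  refine ⟨g, hg, Pr.ext ?_ ?_⟩
  · rw [smul_v, e1, Matrix.add_mulVec, rk_mulVec, h1]
    simp
  · rw [smul_f, e2, Matrix.vecMul_sub, Matrix.vecMul_vecMulVec, dotProduct_sub, h1, h1']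
    simp

lemma core_A {σ : List (Pr N D)} (hσ : ND σ) {y y' : Pr N D}
    (h : perpL y σ) (h' : perpL y' σ) (h1 : unit y) (h1' : unit y') {a : Fin N → D}
    (ha : ∀ x ∈ σ, x.f ⬝ᵥ a = 0) (ha0 : y.f ⬝ᵥ a = 0) (ha1 : y'.f ⬝ᵥ a ≠ 0) :
    ∃ g ∈ Com σ, g • y = y' := by
  let w : Fin N → D := y.v + ((1 - y'.f ⬝ᵥ y.v) / (y'.f ⬝ᵥ a)) • a
  have hw : ∀ x ∈ σ, x.f ⬝ᵥ w = 0 := by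
    intro x hx
    simp [w, ha x hx, (h x hx).2]
  have hw1 : y.f ⬝ᵥ w = 1 := by
    have : y.f ⬝ᵥ y.v = 1 := h1
    simp [w, ha0, this]
  have hw2 : y'.f ⬝ᵥ w = 1 := by
    simp only [w, dotProduct_add, dotProduct_smul, smul_eq_mul]
    rw [div_mul_cancel₀ _ ha1]; ring
  obtain ⟨g1, hg1, e1⟩ := move_v hσ (v := y.v) (v' := w) (f := y.f) h
    (fun x hx => ⟨(h x hx).1, hw x hx⟩) h1 hw1
  obtain ⟨g2, hg2, e2⟩ := move_f hσ (v := w) (f := y.f) (f' := y'.f)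
    (fun x hx => ⟨(h x hx).1, hw x hx⟩) (fun x hx => ⟨(h' x hx).1, hw x hx⟩) hw1 hw2
  obtain ⟨g3, hg3, e3⟩ := move_v hσ (v := w) (v' := y'.v) (f := y'.f)
    (fun x hx => ⟨(h' x hx).1, hw x hx⟩) h' hw2 h1'
  exact ⟨g3 * (g2 * g1), mul_mem hg3 (mul_mem hg2 hg1), by
    rw [mul_smul, mul_smul]
    change g3 • g2 • g1 • (⟨y.v, y.f⟩ : Pr N D) = _
    rw [e1, e2, e3]⟩

lemma core {σ : List (Pr N D)} (hσ : ND σ) (hN : σ.length + 1 < N) {y y' : Pr N D}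
    (h : perpL y σ) (h' : perpL y' σ) (h1 : unit y) (h1' : unit y') :
    ∃ g ∈ Com σ, g • y = y' := by
  by_cases hA : ∃ a : Fin N → D, (∀ x ∈ σ, x.f ⬝ᵥ a = 0) ∧ y.f ⬝ᵥ a = 0 ∧ y'.f ⬝ᵥ a ≠ 0
  · obtain ⟨a, ha, ha0, ha1⟩ := hA
    exact core_A hσ h h' h1 h1' ha ha0 ha1
  push Not at hA
  obtain ⟨z, hz, hz1⟩ := exists_perp (ND_unit hσ h h1) (by simpa using hN)
  obtain ⟨hzy, hzσ⟩ := perpL_cons.1 hz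
  have h1u : y.f ⬝ᵥ y.v = 1 := h1
  have h1u' : y'.f ⬝ᵥ y'.v = 1 := h1'
  have hz1' : z.f ⬝ᵥ z.v = 1 := hz1
  have hy2 : perpL ⟨y.v, y.f + z.f⟩ σ := fun x hx => ⟨by
    simp [(h x hx).1, (hzσ x hx).1], (h x hx).2⟩
  have hy2u : (y.f + z.f) ⬝ᵥ y.v = 1 := by rw [add_dotProduct, h1u, hzy.1, add_zero]
  obtain ⟨g1, hg1, e1⟩ := move_f hσ (v := y.v) (f := y.f) (f' := y.f + z.f) h hy2 h1 hy2u
  have hne : y'.f ⬝ᵥ y.v ≠ 0 := by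
    intro h0
    have := hA (y'.v - (y.f ⬝ᵥ y'.v) • y.v)
      (fun x hx => by simp [(h x hx).2, (h' x hx).2]) (by simp [h1u])
    rw [dotProduct_sub, dotProduct_smul, h0, h1u'] at this
    simp at this
  have hz0 : y'.f ⬝ᵥ z.v = 0 := hA z.v (fun x hx => (hzσ x hx).2) hzy.2
  obtain ⟨g2, hg2, e2⟩ := core_A hσ hy2 h' hy2u h1' (a := y.v - z.v)
    (fun x hx => by simp [(h x hx).2, (hzσ x hx).2])
    (by
      change (y.f + z.f) ⬝ᵥ (y.v - z.v) = 0
      rw [dotProduct_sub, hy2u, add_dotProduct, hzy.2, hz1']; simp)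
    (by rw [dotProduct_sub, hz0, sub_zero]; exact hne)
  refine ⟨g2 * g1, mul_mem hg2 hg1, ?_⟩
  rw [mul_smul]
  change g2 • g1 • (⟨y.v, y.f⟩ : Pr N D) = _
  rw [e1, e2]

end Eta

end Part6

section Part7

open Matrix

section Induction
variable {N : ℕ} {D : Type} [Field D] [Infinite D]

lemma Fx_stab (τ r : List (Pr N D)) : Fx τ ⊓ MulAction.stabilizer (SLN N D) r = Fx (r ++ τ) := by
  ext g
  rw [Subgroup.mem_inf, MulAction.mem_stabilizer_iff, list_fix, mem_Fx, mem_Fx]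
  simp only [List.mem_append, or_imp, forall_and]
  tauto

lemma Fx_congr {σ τ : List (Pr N D)} (h : ∀ x, x ∈ σ ↔ x ∈ τ) : Fx σ = Fx τ := by
  ext g
  simp only [mem_Fx, h]

lemma Fx_cons_le (u : Pr N D) (τ : List (Pr N D)) : Fx (u :: τ) ≤ Fx τ :=
  fun _ hg x hx => hg x (List.mem_cons_of_mem _ hx)

lemma Fx_mid (u : Pr N D) (r τ : List (Pr N D)) : Fx (r ++ u :: τ) = Fx (u :: (r ++ τ)) :=
  Fx_congr (by intro x; simp; tauto)

lemma perpL_fix {g : SLN N D} {x : Pr N D} {τ : List (Pr N D)} (hg : g ∈ Fx τ) (h : perpL x τ) :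
    perpL (g • x) τ := by
  have hτ : g • τ = τ := list_fix.2 hg
  rw [← hτ]
  exact (perpL_smul g).2 h

lemma Van_base {τ : List (Pr N D)} {u : Pr N D} (hm : τ.length + 1 < N) (hτ : ND τ)
    (hu : perpL u τ) (h1 : unit u) : RelVan (Fx τ) (Fx (u :: τ)) 1 := by
  refine base_abs _ _ ?_
  intro g hg
  obtain ⟨t, ⟨t', ht', rfl⟩, ht2⟩ := core hτ hm (perpL_fix hg hu) hu ((unit_smul g).2 h1) h1
  refine ⟨t', ht', ?_⟩
  intro x hx
  rcases List.mem_cons.1 hx with rfl | hx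
  · rw [mul_smul]; exact ht2
  · rw [mul_smul, hg x hx]; exact t'.2 x hx

theorem Van : ∀ (m k : ℕ), 1 ≤ k → 2 * k ≤ m → ∀ (τ : List (Pr N D)) (u : Pr N D),
    τ.length + m = N → ND τ → perpL u τ → unit u → RelVan (Fx τ) (Fx (u :: τ)) k := by
  intro m
  induction m using Nat.strong_induction_on with
  | _ m ih =>
  intro k hk hkm τ u hN hτ hu h1
  by_cases hm : m = 2
  · obtain rfl : k = 1 := by omega
    exact Van_base (by omega) hτ hu h1
  have hkm' : k + 1 < m := by omega
  refine step_abs (Fx_cons_le u τ) (XX τ) (XX (u :: τ)) k hk ?_ ?_ ?_ ?_ ?_ ?_ ?_ ?_ ?_ ?_ ?_ ?_ ?_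
  · intro i s hs
    exact ((XX_cons hu h1).1 hs).1
  · intro i g hg s hs
    exact XX_smul hs hg
  · intro i g hg s hs
    exact XX_smul hs hg
  · intro i s hs
    exact hs.1
  · refine ⟨rfl, by simp, ?_⟩
    intro σ' h
    rw [List.sublist_nil.1 h]
    exact ND_unit hτ hu h1
  · intro i s hs t ht hl
    exact XX_face hs ht hl
  · intro i s hs t ht hl
    exact XX_face hs ht hl
  · intro i hi s hs
    have hnd := hs.2.2 s (List.Sublist.refl _)
    obtain ⟨x, hx, hx1⟩ := exists_perp hnd (by rw [List.length_append, hs.1]; omega)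
    obtain ⟨hxs, hxτ⟩ := perpL_append.1 hx
    obtain ⟨g, hg, hgx⟩ := core hτ (by omega) hxτ hu hx1 h1
    have hg' := Com_le _ hg
    refine ⟨g, hg', (XX_cons hu h1).2 ⟨XX_smul hs hg', ?_⟩⟩
    intro y hy
    obtain ⟨z, hz, rfl⟩ := mem_smul_list.1 hy
    rw [← hgx]
    exact (perp_smul g).2 (hxs z hz).symm
  · intro i hi s hs g hg hgs
    have hs2 := (XX_cons hu h1).1 hs
    have hgs2 := (XX_cons hu h1).1 hgs
    have hnd := hgs2.1.2.2 (g • s) (List.Sublist.refl _)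
    obtain ⟨h, hh, hhu⟩ := core hnd (by rw [List.length_append, hgs2.1.1]; omega)
      (y := g • u) (y' := u)
      (perpL_append.2 ⟨(perpL_smul g).2 (fun x hx => (hs2.2 x hx).symm), perpL_fix hg hu⟩)
      (perpL_append.2 ⟨fun x hx => (hgs2.2 x hx).symm, hu⟩)
      ((unit_smul g).2 h1) h1
    have hh' := Com_le _ hh
    refine ⟨h * g, ?_, ?_⟩
    · intro x hx
      rcases List.mem_cons.1 hx with rfl | hx
      · rw [mul_smul]; exact hhu
      · rw [mul_smul, hg x hx]; exact hh' x (by simp [hx])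
    · rw [mul_smul]
      exact list_fix.2 (fun x hx => hh' x (by simp [hx]))
  · intro i hi T hT
    exact cone_exists hτ (by omega) T hT
  · intro i hi T hT
    exact cone_exists (ND_unit hτ hu h1) (by rw [List.length_cons]; omega) T hT
  · intro i j hij hj r hr
    have hr2 := (XX_cons hu h1).1 hr
    rw [Fx_stab, Fx_stab, Fx_mid]
    refine ih (m - (i + 2)) (by omega) j hj (by omega) (r ++ τ) u ?_
      (hr2.1.2.2 r (List.Sublist.refl _)) ?_ h1
    · rw [List.length_append, hr2.1.1]; omega
    · exact perpL_append.2 ⟨fun x hx => (hr2.2 x hx).symm, hu⟩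
  · intro r hr b hb hdb
    have hr2 := (XX_cons hu h1).1 hr
    obtain ⟨x0, rfl⟩ := List.length_eq_one_iff.1 hr2.1.1
    obtain ⟨hx0, hx01⟩ := hr2.1.2.1 x0 (by simp)
    have hp : perp x0 u := hr2.2 x0 (by simp)
    have hVU := VU hx01 h1 hp
    have hη : ∀ l, eta x0 u hVU l ∈ Fx τ := fun l z hz =>
      eta_fix hVU (hx0 z hz).symm (hu z hz).symm l
    refine z0_abs (eta x0 u hVU) (Fx τ) (Fx (u :: τ)) _ _ inf_le_left
      (le_trans inf_le_left (Fx_cons_le u τ)) hη ?_ (wS D) wS_comm ?_ (Fx_cons_le u τ) k b hb hdb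
    · intro l h hh
      have hh0 : h • x0 = x0 := list_fix.1 (MulAction.mem_stabilizer_iff.1 hh.2) x0 (by simp)
      exact eta_comm hVU hh0 (hh.1 u (by simp)) l
    · intro h hh x hx
      have hh0 : h • x0 = x0 := list_fix.1 (MulAction.mem_stabilizer_iff.1 hh.2) x0 (by simp)
      rcases List.mem_cons.1 hx with rfl | hx
      · have e := eta_wS hVU
        have e' : (eta x0 x hVU (wS D))⁻¹ • x = x0 := by rw [inv_smul_eq_iff, e]
        rw [mul_smul, mul_smul, e', hh0, e]
      · have := mul_mem (mul_mem (hη (wS D)) hh.1) (inv_mem (hη (wS D)))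
        exact this x hx

end Induction

end Part7

section Part8

open Finsupp

section Bridge
variable {Γ Γ' : Type} [Group Γ] [Group Γ']

lemma bd0_sum (l : List Γ) :
    bd0 l = ∑ i : Fin l.length, single (l.eraseIdx i) ((-1 : ℤ) ^ (i : ℕ)) := by
  induction l with
  | nil => simp [bd0]
  | cons a l ih =>
    rw [bd0, ih]
    simp only [List.length_cons]
    rw [Fin.sum_univ_succ]
    simp only [Fin.val_zero, List.eraseIdx_zero, List.tail_cons, pow_zero, Fin.val_succ,
      List.eraseIdx_cons_succ, map_sum, consL_single, sub_eq_add_neg]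
    congr 1
    rw [← Finset.sum_neg_distrib]
    refine Finset.sum_congr rfl fun i _ => ?_
    rw [← Finsupp.single_neg, pow_succ]
    simp

def tt (k : ℕ) (l : List Γ) : Fin k → Γ := fun j => (l[(j : ℕ)]?.getD 1)⁻¹ * l[(j : ℕ) + 1]?.getD 1

noncomputable def TT (k : ℕ) : KK Γ →ₗ[ℤ] ((Fin k → Γ) →₀ ℤ) := Finsupp.lmapDomain ℤ ℤ (tt k)

lemma TT_single (k : ℕ) (l : List Γ) (n : ℤ) : TT k (single l n) = single (tt k l) n := by
  simp [TT]

lemma barDiff_single (k : ℕ) (c : Fin (k + 1) → Γ) : barDiff ℤ Γ k (single c 1) =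
    Finsupp.single (fun j : Fin k => c j.succ) (1 : ℤ)
      + ∑ i : Fin k, Finsupp.single
          (fun j : Fin k => if (j : ℕ) < (i : ℕ) then c (Fin.castSucc j)
            else if (j : ℕ) = (i : ℕ) then c (Fin.castSucc i) * c i.succ
            else c j.succ) ((-1 : ℤ) ^ ((i : ℕ) + 1))
      + Finsupp.single (fun j : Fin k => c (Fin.castSucc j)) ((-1 : ℤ) ^ (k + 1)) := by
  rw [barDiff, Finsupp.lift_apply, Finsupp.sum_single_index (by simp), one_smul]

lemma barDiff_TT {k : ℕ} {x : KK Γ} (hx : x ∈ LL (Set.univ : Set Γ) (k + 2)) :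
    barDiff ℤ Γ k (TT (k + 1) x) = TT k (bd x) := by
  have : (barDiff ℤ Γ k ∘ₗ TT (k + 1) - TT k ∘ₗ bd : KK Γ →ₗ[ℤ] _) x ∈ (⊥ : Submodule ℤ ((Fin k → Γ) →₀ ℤ)) := by
    refine map_LL_le _ ?_ hx
    intro l hl _
    rw [Submodule.mem_bot, LinearMap.sub_apply, sub_eq_zero, LinearMap.comp_apply,
      LinearMap.comp_apply, TT_single, barDiff_single, bd_single, bd0_sum, map_sum]
    simp only [TT_single]
    rw [← Equiv.sum_comp (finCongr hl.symm), Fin.sum_univ_succ, Fin.sum_univ_castSucc, ← add_assoc]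
    congr 1
    · congr 1
      · congr 1
        funext j
        simp [tt, List.getElem?_eraseIdx]
      · refine Finset.sum_congr rfl fun i _ => ?_
        congr 1
        funext j
        simp only [tt, List.getElem?_eraseIdx, Fin.val_castSucc, Fin.val_succ, finCongr_apply,
          Fin.val_cast]
        rcases lt_trichotomy (j : ℕ) (i : ℕ) with h | h | h
        · rw [if_pos h, if_pos (by omega), if_pos (by omega)]
        · rw [if_neg (by omega), if_pos h, if_pos (by omega), if_neg (by omega), h]
          group
        · rw [if_neg (by omega), if_neg (by omega), if_neg (by omega), if_neg (by omega)]
    · congr 1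
      funext j
      simp only [tt, List.getElem?_eraseIdx, Fin.val_castSucc, Fin.val_succ, finCongr_apply,
          Fin.val_cast, Fin.val_last]
      rw [if_pos (by omega), if_pos (by omega)]
  rw [Submodule.mem_bot, LinearMap.sub_apply, sub_eq_zero] at this
  exact this

lemma tt_map {k : ℕ} {l : List Γ} (hl : l.length = k + 1) (g : Γ) :
    tt k (l.map (fun a => g * a)) = tt k l := by
  funext j
  have h1 : (j : ℕ) < l.length := by omega
  have h2 : (j : ℕ) + 1 < l.length := by omega
  simp only [tt, List.getElem?_map, List.getElem?_eq_getElem h1, List.getElem?_eq_getElem h2,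
    Option.map_some, Option.getD_some]
  group

lemma TT_Co {k : ℕ} {G : Subgroup Γ} {x : KK Γ} (hx : x ∈ Co G (k + 1)) : TT k x = 0 := by
  have : Co G (k + 1) ≤ LinearMap.ker (TT (Γ := Γ) k) := by
    refine Submodule.span_le.2 ?_
    rintro _ (⟨g, _, l, hl, _, rfl⟩ | ⟨h, _⟩)
    · change TT k _ = 0
      rw [map_sub, mapL_single, TT_single, TT_single, tt_map hl, sub_self]
    · omega
  exact this hx

noncomputable def SS (k : ℕ) : ((Fin k → Γ) →₀ ℤ) →ₗ[ℤ] KK Γ :=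
  Finsupp.lmapDomain ℤ ℤ (fun c => List.ofFn (Fin.partialProd c))

lemma SS_single (k : ℕ) (c : Fin k → Γ) (n : ℤ) :
    SS k (single c n) = single (List.ofFn (Fin.partialProd c)) n := by
  simp [SS]

lemma fin_chain_ind {A : Type} (M : Submodule ℤ (KK Γ)) (f : (A →₀ ℤ) →ₗ[ℤ] KK Γ)
    (h : ∀ c, f (single c 1) ∈ M) (z) : f z ∈ M := by
  induction z using Finsupp.induction_linear with
  | zero => simp
  | add a b ha hb => rw [map_add]; exact M.add_mem ha hb
  | single a n =>
    have : single a n = n • (single a (1 : ℤ)) := by simp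
    rw [this, map_smul]
    exact M.smul_mem _ (h a)

lemma SS_mem (k : ℕ) (z : (Fin k → Γ) →₀ ℤ) : SS k z ∈ LL (Set.univ : Set Γ) (k + 1) := by
  refine fin_chain_ind _ _ (fun c => ?_) z
  rw [SS_single]
  exact single_mem_LL (by simp) (by simp)

lemma TT_SS (k : ℕ) (z : (Fin k → Γ) →₀ ℤ) : TT k (SS k z) = z := by
  have : TT k ∘ₗ SS k = (LinearMap.id : ((Fin k → Γ) →₀ ℤ) →ₗ[ℤ] _) := by
    ext1 c
    ext1
    simp only [LinearMap.comp_apply, lsingle_apply, SS_single, TT_single, LinearMap.id_apply]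
    congr 1
    funext j
    have h1 : (j : ℕ) < (List.ofFn (Fin.partialProd c)).length := by simp
    have h2 : (j : ℕ) + 1 < (List.ofFn (Fin.partialProd c)).length := by simp
    simp only [tt, List.getElem?_eq_getElem h1, List.getElem?_eq_getElem h2, Option.getD_some,
      List.getElem_ofFn]
    exact Fin.partialProd_right_inv c j
  exact LinearMap.congr_fun this z

lemma SS_tt {k : ℕ} {l : List Γ} (hl : l.length = k + 1) :
    List.ofFn (Fin.partialProd (tt k l)) = l.map (fun a => (l[0]?.getD 1)⁻¹ * a) := by
  have key : ∀ i : Fin (k + 1), Fin.partialProd (tt k l) i =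
      (l[0]?.getD 1)⁻¹ * l[(i : ℕ)]?.getD 1 := by
    intro i
    induction i using Fin.induction with
    | zero => simp
    | succ i ih =>
      rw [Fin.partialProd_succ, ih]
      simp [tt]
  apply List.ext_getElem
  · simp [hl]
  · intro i h1 h2
    have h3 : i < l.length := by simpa using h2
    rw [List.getElem_ofFn, key, List.getElem_map]
    simp [List.getElem?_eq_getElem h3]

lemma SS_TT {k : ℕ} {y : KK Γ} (hy : y ∈ LL (Set.univ : Set Γ) (k + 1)) :
    y - SS k (TT k y) ∈ Co (⊤ : Subgroup Γ) (k + 1) := by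
  have : (SS k ∘ₗ TT k - LinearMap.id : KK Γ →ₗ[ℤ] KK Γ) y ∈ Co (⊤ : Subgroup Γ) (k + 1) := by
    refine map_LL_le _ ?_ hy
    intro l hl _
    rw [LinearMap.sub_apply, LinearMap.comp_apply, TT_single, SS_single, SS_tt hl,
      LinearMap.id_apply, ← mapL_single (fun a => (l[0]?.getD 1)⁻¹ * a)]
    exact trans_mem_Co (Subgroup.mem_top _) (single_mem_LL hl (by simp))
  have := Submodule.neg_mem _ this
  simpa using this

variable {φ : Γ' →* Γ} {G' : Subgroup Γ}

lemma barMap_single (k : ℕ) (c : Fin k → Γ') (n : ℤ) :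
    barMap ℤ φ k (single c n) = single (φ ∘ c) n := by
  simp [barMap]

lemma SS_barMap (h : ∀ a, φ a ∈ G') (k : ℕ) (y : (Fin k → Γ') →₀ ℤ) :
    SS k (barMap ℤ φ k y) ∈ LL (G' : Set Γ) (k + 1) := by
  refine fin_chain_ind _ (SS k ∘ₗ barMap ℤ φ k) (fun c => ?_) y
  rw [LinearMap.comp_apply, barMap_single, SS_single]
  refine single_mem_LL (by simp) ?_
  intro a ha
  obtain ⟨i, rfl⟩ := (List.mem_ofFn' _ _).1 ha
  induction i using Fin.induction with
  | zero => simpa using G'.one_mem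
  | succ i ih =>
    rw [Fin.partialProd_succ]
    exact G'.mul_mem (ih ((List.mem_ofFn' _ _).2 ⟨_, rfl⟩)) (h _)

lemma TT_LL (h : ∀ g ∈ G', ∃ a, φ a = g) {k : ℕ} {x : KK Γ} (hx : x ∈ LL (G' : Set Γ) (k + 1)) :
    TT k x ∈ LinearMap.range (barMap ℤ φ k) := by
  refine map_LL_le _ ?_ hx
  intro l hl hl2
  rw [TT_single]
  have hm : ∀ j, tt k l j ∈ G' := by
    intro j
    have h1 : (j : ℕ) < l.length := by omega
    have h2 : (j : ℕ) + 1 < l.length := by omega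
    simp only [tt, List.getElem?_eq_getElem h1, List.getElem?_eq_getElem h2, Option.getD_some]
    exact G'.mul_mem (G'.inv_mem (hl2 _ (List.getElem_mem _))) (hl2 _ (List.getElem_mem _))
  choose c hc using fun j => h _ (hm j)
  refine ⟨single c 1, ?_⟩
  rw [barMap_single]
  congr 1
  funext j
  exact hc j

lemma barDiff_barMap (k : ℕ) (y : (Fin (k + 1) → Γ') →₀ ℤ) :
    barDiff ℤ Γ k (barMap ℤ φ (k + 1) y) = barMap ℤ φ k (barDiff ℤ Γ' k y) := by
  have : barDiff ℤ Γ k ∘ₗ barMap ℤ φ (k + 1) = barMap ℤ φ k ∘ₗ barDiff ℤ Γ' k := by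
    ext1 c
    ext1
    simp only [LinearMap.comp_apply, lsingle_apply, barMap_single, barDiff_single, map_add, map_sum]
    congr 1
    congr 1
    refine Finset.sum_congr rfl fun i _ => ?_
    congr 1
    funext j
    simp only [Function.comp_apply]
    split_ifs <;> simp
  exact LinearMap.congr_fun this y

lemma barDiff_barDiff (k : ℕ) (y : (Fin (k + 2) → Γ) →₀ ℤ) :
    barDiff ℤ Γ k (barDiff ℤ Γ (k + 1) y) = 0 := by
  rw [← TT_SS _ y, barDiff_TT (SS_mem _ _), barDiff_TT (bd_mem (SS_mem _ _)), bd_bd, map_zero]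

lemma barMap_inj (hφ : Function.Injective φ) (k : ℕ) : Function.Injective (barMap ℤ φ k) :=
  Finsupp.mapDomain_injective (fun a b h => funext fun i => hφ (congrFun h i))

lemma rel_bar (h1 : ∀ a, φ a ∈ G') (h2 : ∀ g ∈ G', ∃ a, φ a = g) {k : ℕ}
    (hv : RelVan (⊤ : Subgroup Γ) G' (k + 1)) (z : (Fin (k + 1) → Γ) →₀ ℤ)
    (hz : barDiff ℤ Γ k z ∈ LinearMap.range (barMap ℤ φ k)) :
    ∃ w, z - barDiff ℤ Γ (k + 1) w ∈ LinearMap.range (barMap ℤ φ (k + 1)) := by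
  rw [RelVan, Subgroup.coe_top] at hv
  have hx := SS_mem _ z
  obtain ⟨w, hw, hw2⟩ := hv (SS _ z) hx (by
    obtain ⟨y, hy⟩ := hz
    have e : SS k (TT k (bd (SS (k + 1) z))) = SS k (barMap ℤ φ k y) := by
      rw [← barDiff_TT hx, TT_SS, hy]
    have e2 := SS_TT (bd_mem hx)
    rw [e] at e2
    have := Submodule.add_mem_sup e2 (SS_barMap h1 k y)
    rwa [sub_add_cancel] at this)
  refine ⟨TT _ w, ?_⟩
  obtain ⟨c, hc, d, hd, e⟩ := Submodule.mem_sup.1 hw2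
  have := TT_LL h2 hd
  have e' := congrArg (TT (k + 1)) e
  rw [map_add, TT_Co hc, zero_add, map_sub, TT_SS, ← barDiff_TT hw] at e'
  rwa [← e']

theorem bridge (hφ : Function.Injective φ) (h1 : ∀ a, φ a ∈ G') (h2 : ∀ g ∈ G', ∃ a, φ a = g)
    {k : ℕ} (hv : RelVan (⊤ : Subgroup Γ) G' (k + 1)) :
    BarInducedSurj ℤ φ (k + 1) ∧ BarInducedInj ℤ φ k := by
  constructor
  · intro z hz
    have hz' : barDiff ℤ Γ k z = 0 := hz
    obtain ⟨w, y, hy⟩ := rel_bar h1 h2 hv z (by rw [hz']; exact Submodule.zero_mem _)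
    refine ⟨y, ?_, ?_⟩
    · change barDiff ℤ Γ' k y = 0
      apply barMap_inj hφ k
      rw [← barDiff_barMap, hy, map_sub, hz', barDiff_barDiff, map_zero, sub_zero]
    · rw [hy, sub_sub_cancel]
      exact ⟨w, rfl⟩
  · rintro w _ ⟨z, hz⟩
    obtain ⟨w', y, hy⟩ := rel_bar h1 h2 hv z ⟨w, hz.symm⟩
    refine ⟨y, barMap_inj hφ k ?_⟩
    rw [← barDiff_barMap, hy, map_sub, hz, barDiff_barDiff, sub_zero]

end Bridge

section Final
open Matrix
variable {D : Type} [Field D] {n : ℕ}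

def lastP (D : Type) [Field D] (n : ℕ) : Pr (n + 1) D :=
  ⟨Pi.single (Fin.last n) 1, Pi.single (Fin.last n) 1⟩

def blk (A : Matrix (Fin n) (Fin n) D) : Matrix (Fin (n + 1)) (Fin (n + 1)) D :=
  (Matrix.fromBlocks A 0 0 (1 : Matrix (Fin 1) (Fin 1) D)).submatrix
    finSumFinEquiv.symm finSumFinEquiv.symm

lemma blk_cc (A : Matrix (Fin n) (Fin n) D) (i j : Fin n) :
    blk A i.castSucc j.castSucc = A i j := by
  simp [blk]

lemma blk_cl (A : Matrix (Fin n) (Fin n) D) (i : Fin n) :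
    blk A i.castSucc (Fin.last n) = 0 := by
  simp [blk]

lemma blk_lc (A : Matrix (Fin n) (Fin n) D) (i : Fin n) :
    blk A (Fin.last n) i.castSucc = 0 := by
  simp [blk]

lemma blk_ll (A : Matrix (Fin n) (Fin n) D) :
    blk A (Fin.last n) (Fin.last n) = 1 := by
  simp [blk]

lemma blk_mul (A B : Matrix (Fin n) (Fin n) D) : blk (A * B) = blk A * blk B := by
  rw [blk, blk, blk, Matrix.submatrix_mul_equiv, Matrix.fromBlocks_multiply]
  simp

lemma blk_det (A : Matrix (Fin n) (Fin n) D) : (blk A).det = A.det := by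
  rw [blk, Matrix.det_submatrix_equiv_self, Matrix.det_fromBlocks_zero₂₁]
  simp

noncomputable def slHom (D : Type) [Field D] (n : ℕ) : SLN n D →* SLN (n + 1) D :=
  MonoidHom.mk' (slEmb D n) (fun A B => Subtype.ext (blk_mul A.1 B.1))

lemma slHom_val (A : SLN n D) : mx (slHom D n A) = blk A.1 := rfl

lemma slHom_inj : Function.Injective (slHom D n) := by
  intro A B h
  apply Subtype.ext
  ext i j
  have := congrFun (congrFun (congrArg mx h) i.castSucc) j.castSucc
  rwa [slHom_val, slHom_val, blk_cc, blk_cc] at this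

lemma slHom_mem (A : SLN n D) : slHom D n A ∈ Fx [lastP D n] := by
  intro x hx
  obtain rfl := List.mem_singleton.1 hx
  apply Pr.ext
  · rw [smul_v, slHom_val]
    simp only [lastP]
    rw [Matrix.mulVec_single_one]
    ext i
    induction i using Fin.lastCases with
    | last => simp [Matrix.col_apply, blk_ll]
    | cast i => simp [Matrix.col_apply, blk_cl]
  · rw [smul_f, ← map_inv, slHom_val]
    simp only [lastP]
    rw [Matrix.single_one_vecMul]
    ext i
    induction i using Fin.lastCases with
    | last => simp [Matrix.row_apply, blk_ll]
    | cast i => simp [Matrix.row_apply, blk_lc]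

lemma slHom_surj (g : SLN (n + 1) D) (hg : g ∈ Fx [lastP D n]) : ∃ A, slHom D n A = g := by
  have h := hg _ (List.mem_singleton.2 rfl)
  have h1 : mx g *ᵥ Pi.single (Fin.last n) 1 = Pi.single (Fin.last n) 1 := congrArg Pr.v h
  have h2 : Pi.single (Fin.last n) 1 ᵥ* mx g⁻¹ = Pi.single (Fin.last n) 1 := congrArg Pr.f h
  have h3 : Pi.single (Fin.last n) 1 ᵥ* mx g = Pi.single (Fin.last n) 1 := by
    conv_lhs => rw [← h2]
    rw [Matrix.vecMul_vecMul, mx_inv_mul, Matrix.vecMul_one]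
  rw [Matrix.mulVec_single_one] at h1
  rw [Matrix.single_one_vecMul] at h3
  let A : Matrix (Fin n) (Fin n) D := fun i j => mx g i.castSucc j.castSucc
  have hA : blk A = mx g := by
    ext i j
    induction i using Fin.lastCases with
    | last =>
      have := congrFun h3 j
      induction j using Fin.lastCases with
      | last => rw [blk_ll]; simpa [Matrix.row_apply] using this.symm
      | cast j => rw [blk_lc]; simpa [Matrix.row_apply] using this.symm
    | cast i =>
      have := congrFun h1 i.castSucc
      induction j using Fin.lastCases with
      | last => rw [blk_cl]; simpa [Matrix.col_apply] using this.symm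
      | cast j => rw [blk_cc]
  refine ⟨⟨A, ?_⟩, Subtype.ext hA⟩
  rw [← blk_det, hA]
  exact g.2

end Final


end Part8

/-- Let `D` be an infinite field and let `k ≥ 1` and `n ≥ 1` satisfy
`n ≥ 2k − 1`.  Then the relative integral group homology `H_k(SL_{n+1}(D), SL_n(D); ℤ)`
vanishes; equivalently, the map `H_k(SL_n(D); ℤ) → H_k(SL_{n+1}(D); ℤ)` induced by the block
embedding `A ↦ diag(A, 1)` is surjective and the induced map
`H_{k−1}(SL_n(D); ℤ) → H_{k−1}(SL_{n+1}(D); ℤ)` is injective. -/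
theorem statement0 (D : Type) [Field D] [Infinite D] (k n : ℕ)
    (hk : 1 ≤ k) (hn : 1 ≤ n) (hkn : 2 * k ≤ n + 1) :
    BarInducedSurj ℤ (slEmb D n) k ∧ BarInducedInj ℤ (slEmb D n) (k - 1) := by
  obtain ⟨k, rfl⟩ : ∃ k', k = k' + 1 := ⟨k - 1, by omega⟩
  have hv := Van (D := D) (N := n + 1) (n + 1) (k + 1) hk hkn [] (lastP D n) (by simp) ND_nil
    (by intro y hy; simp at hy) (by simp [unit, lastP])
  have hT : Fx ([] : List (Pr (n + 1) D)) = ⊤ := by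
    ext g; simp [mem_Fx]
  rw [hT] at hv
  exact bridge (φ := slHom D n) slHom_inj slHom_mem slHom_surj hv

end Stmt0
end

section
/- The abelianization of Γ (equivalently, H_1(Γ; Z)) is isomorphic to the kernel of the linear map 𝒟 : (Z/N)³ → (Z/N)^q given by 𝒟(x₁, x₂, x₃) = (δ₁(j)x₁ + δ₂(j)x₂ + δ₃(j)x₃)_{j=1,…,q}. In particular, Γ is a perfect group if and only if 𝒟 is injective. -/
namespace Stmt5

/-- The relators of the presentation
`Γ = ⟨σ₁, σ₂, σ₃ ∣ σᵢ^N = 1 (i = 1,2,3), σ₁^{δ₁(j)} σ₂^{δ₂(j)} σ₃^{δ₃(j)} = 1 (0 ≤ j ≤ q)⟩`,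
where `N = q² + q + 1` and `δ i : Fin (q+1) → ZMod N` are the three ordered difference sets
(here exponentiation by an element `δ ∈ ZMod N` means exponentiation by the integer
representative `δ.val ∈ {0, …, N-1}`, which is well defined modulo the relation `σᵢ^N = 1`).
The generators `σ₁, σ₂, σ₃` correspond to `0, 1, 2 : Fin 3`. -/
def singerRels (q : ℕ) (δ : Fin 3 → Fin (q + 1) → ZMod (q ^ 2 + q + 1)) :
    Set (FreeGroup (Fin 3)) :=
  {r | (∃ i : Fin 3, r = FreeGroup.of i ^ (q ^ 2 + q + 1)) ∨
    (∃ j : Fin (q + 1),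
      r = FreeGroup.of 0 ^ (δ 0 j).val * FreeGroup.of 1 ^ (δ 1 j).val *
        FreeGroup.of 2 ^ (δ 2 j).val)}

/-- The panel-regular `Ã₂`-lattice
`Γ = ⟨σ₁, σ₂, σ₃ ∣ σᵢ^N = 1, σ₁^{δ₁(j)} σ₂^{δ₂(j)} σ₃^{δ₃(j)} = 1 for all j⟩`. -/
def SingerLattice (q : ℕ) (δ : Fin 3 → Fin (q + 1) → ZMod (q ^ 2 + q + 1)) :=
  PresentedGroup (singerRels q δ)

instance (q : ℕ) (δ : Fin 3 → Fin (q + 1) → ZMod (q ^ 2 + q + 1)) :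
    Group (SingerLattice q δ) := by
  unfold SingerLattice; infer_instance

/-- The linear map `𝒟 : (ZMod N)³ → (ZMod N)^q` given by
`𝒟(x₁, x₂, x₃) = (δ₁(j)x₁ + δ₂(j)x₂ + δ₃(j)x₃)_{j = 1, …, q}`. -/
noncomputable def diffMap (q : ℕ) (δ : Fin 3 → Fin (q + 1) → ZMod (q ^ 2 + q + 1)) :
    (Fin 3 → ZMod (q ^ 2 + q + 1)) →ₗ[ZMod (q ^ 2 + q + 1)] (Fin q → ZMod (q ^ 2 + q + 1)) :=
  Matrix.mulVecLin (Matrix.of fun (j : Fin q) (i : Fin 3) => δ i j.succ)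

/-- `Δ ⊆ ZMod N` is a planar difference set of order `q` if it has `q + 1` elements and every
nonzero element of `ZMod N` is uniquely a difference of two elements of `Δ`. -/
def IsPlanarDifferenceSet (q : ℕ) (Δ : Set (ZMod (q ^ 2 + q + 1))) : Prop :=
  Δ.ncard = q + 1 ∧ ∀ x : ZMod (q ^ 2 + q + 1), x ≠ 0 →
    ∃! de : ZMod (q ^ 2 + q + 1) × ZMod (q ^ 2 + q + 1),
      (de.1 ∈ Δ ∧ de.2 ∈ Δ) ∧ de.1 - de.2 = x

/-- The lattice is the presented group. -/
def latEquiv (q : ℕ) (δ : Fin 3 → Fin (q + 1) → ZMod (q ^ 2 + q + 1)) :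
    SingerLattice q δ ≃* PresentedGroup (singerRels q δ) where
  toFun := fun x => x
  invFun := fun x => x
  left_inv := fun _ => rfl
  right_inv := fun _ => rfl
  map_mul' := fun _ _ => rfl

/-- The canonical projection from the free group to the abelianization. -/
def proj (q : ℕ) (δ : Fin 3 → Fin (q + 1) → ZMod (q ^ 2 + q + 1)) :
    FreeGroup (Fin 3) →* Abelianization (SingerLattice q δ) :=
  Abelianization.of.comp ((latEquiv q δ).symm.toMonoidHom.comp
    (PresentedGroup.mk (singerRels q δ)))

theorem proj_surj (q : ℕ) (δ : Fin 3 → Fin (q + 1) → ZMod (q ^ 2 + q + 1)) :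
    Function.Surjective (proj q δ) := by
  have h1 : Function.Surjective
      (Abelianization.of : SingerLattice q δ →* Abelianization (SingerLattice q δ)) :=
    QuotientGroup.mk_surjective
  exact h1.comp ((latEquiv q δ).symm.surjective.comp (PresentedGroup.mk_surjective _))

theorem proj_rel (q : ℕ) (δ : Fin 3 → Fin (q + 1) → ZMod (q ^ 2 + q + 1))
    (r : FreeGroup (Fin 3)) (hr : r ∈ singerRels q δ) : proj q δ r = 1 := by
  simp [proj, PresentedGroup.one_of_mem hr]

theorem proj_hom_ext (q : ℕ) (δ : Fin 3 → Fin (q + 1) → ZMod (q ^ 2 + q + 1))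
    {A : Type*} [Group A] (f g : Abelianization (SingerLattice q δ) →* A)
    (h : ∀ i, f (proj q δ (FreeGroup.of i)) = g (proj q δ (FreeGroup.of i))) : f = g := by
  have h1 : f.comp (proj q δ) = g.comp (proj q δ) := FreeGroup.ext_hom _ _ h
  refine MonoidHom.ext fun x => ?_
  obtain ⟨y, rfl⟩ := proj_surj q δ x
  exact DFunLike.congr_fun h1 y

theorem exists_hom (q : ℕ) (δ : Fin 3 → Fin (q + 1) → ZMod (q ^ 2 + q + 1))
    {A : Type*} [CommGroup A] (f : Fin 3 → A)
    (h : ∀ r ∈ singerRels q δ, FreeGroup.lift f r = 1) :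
    ∃ φ : Abelianization (SingerLattice q δ) →* A, ∀ i, φ (proj q δ (FreeGroup.of i)) = f i := by
  refine ⟨Abelianization.lift ((PresentedGroup.toGroup h).comp (latEquiv q δ).toMonoidHom),
    fun i => ?_⟩
  have : proj q δ (FreeGroup.of i) =
    Abelianization.of ((latEquiv q δ).symm (PresentedGroup.of i)) := rfl
  rw [this, Abelianization.lift_apply_of]
  simp

theorem pow_N (q : ℕ) (δ : Fin 3 → Fin (q + 1) → ZMod (q ^ 2 + q + 1))
    (x : Abelianization (SingerLattice q δ)) : x ^ (q ^ 2 + q + 1) = 1 := by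
  have : powMonoidHom (q ^ 2 + q + 1) = (1 : Abelianization (SingerLattice q δ) →* _) := by
    apply proj_hom_ext
    intro i
    rw [powMonoidHom_apply, ← map_pow]
    exact proj_rel q δ _ (Or.inl ⟨i, rfl⟩)
  exact DFunLike.congr_fun this x

theorem finite_ab (q : ℕ) (δ : Fin 3 → Fin (q + 1) → ZMod (q ^ 2 + q + 1)) :
    Finite (Abelianization (SingerLattice q δ)) := by
  have : Group.FG (Abelianization (SingerLattice q δ)) := Group.fg_of_surjective (proj_surj q δ)
  exact CommGroup.finite_of_fg_isMulTorsion _ fun x =>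
    isOfFinOrder_iff_pow_eq_one.mpr ⟨q ^ 2 + q + 1, by positivity, pow_N q δ x⟩

theorem enough (n : ℕ) [NeZero n] : HasEnoughRootsOfUnity (Multiplicative (ZMod n)) n where
  prim := ⟨Multiplicative.ofAdd 1, by
    rw [IsPrimitiveRoot.iff_orderOf, orderOf_ofAdd_eq_addOrderOf, ZMod.addOrderOf_one]⟩
  cyc := by
    have : IsCyclic (Multiplicative (ZMod n))ˣ :=
      isCyclic_of_surjective (toUnits (G := Multiplicative (ZMod n))) toUnits.surjective
    infer_instance

theorem mem_ker_iff (q : ℕ) (δ : Fin 3 → Fin (q + 1) → ZMod (q ^ 2 + q + 1))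
    (x : Fin 3 → ZMod (q ^ 2 + q + 1)) :
    x ∈ LinearMap.ker (diffMap q δ) ↔
      ∀ j : Fin q, δ 0 j.succ * x 0 + δ 1 j.succ * x 1 + δ 2 j.succ * x 2 = 0 := by
  rw [LinearMap.mem_ker, funext_iff]
  simp [diffMap, Matrix.mulVec, dotProduct, Fin.sum_univ_three]

theorem val_nsmul (n : ℕ) [NeZero n] (a b : ZMod n) : a.val • b = a * b := by
  rw [nsmul_eq_mul, ZMod.natCast_zmod_val]

/-- Characters of the abelianization, as elements of the kernel. -/
noncomputable def charMap (q : ℕ) (δ : Fin 3 → Fin (q + 1) → ZMod (q ^ 2 + q + 1)) :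
    Additive (Abelianization (SingerLattice q δ) →* (Multiplicative (ZMod (q ^ 2 + q + 1)))ˣ) →+
      LinearMap.ker (diffMap q δ) where
  toFun φ := ⟨fun i => (φ.toMul (proj q δ (FreeGroup.of i))).val.toAdd, by
    rw [mem_ker_iff]
    intro j
    have h := congrArg (fun y => (φ.toMul y).val.toAdd)
      (proj_rel q δ _ (Or.inr ⟨j.succ, rfl⟩))
    simpa [val_nsmul] using h⟩
  map_zero' := by ext i; simp
  map_add' a b := by ext i; simp

theorem charMap_bij (q : ℕ) (δ : Fin 3 → Fin (q + 1) → ZMod (q ^ 2 + q + 1))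
    (h0 : ∀ i, δ i 0 = 0) : Function.Bijective (charMap q δ) := by
  constructor
  · intro a b h
    apply Additive.toMul.injective
    apply proj_hom_ext
    intro i
    apply Units.ext
    exact Multiplicative.toAdd.injective (congrFun (congrArg Subtype.val h) i)
  · rintro ⟨x, hx⟩
    rw [mem_ker_iff] at hx
    obtain ⟨φ, hφ⟩ := exists_hom q δ (fun i => toUnits (Multiplicative.ofAdd (x i))) (by
      rintro r (⟨i, rfl⟩ | ⟨j, rfl⟩)
      · rw [map_pow, FreeGroup.lift_apply_of, ← map_pow, ← ofAdd_nsmul]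
        simp only [nsmul_eq_mul, ZMod.natCast_self, zero_mul, ofAdd_zero, map_one]
      · simp only [map_mul, map_pow, FreeGroup.lift_apply_of]
        simp only [← map_pow, ← map_mul, ← ofAdd_nsmul, ← ofAdd_add, val_nsmul]
        refine Fin.cases ?_ (fun k => ?_) j
        · simp [h0]
        · rw [hx k]; simp)
    refine ⟨Additive.ofMul φ, ?_⟩
    ext i
    simp [charMap, hφ]

/-- Let `q ≥ 2` be a prime power, `N = q² + q + 1`, and let
`δ₁, δ₂, δ₃ : {0, …, q} → ZMod N` be injections with `δᵢ(0) = 0` whose images are planar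
difference sets of order `q`.  Let `Γ` be the group presented by
`⟨σ₁, σ₂, σ₃ ∣ σᵢ^N = 1, σ₁^{δ₁(j)} σ₂^{δ₂(j)} σ₃^{δ₃(j)} = 1 for all j⟩`.  Then the
abelianization of `Γ` is isomorphic to the kernel of the linear map
`𝒟 : (ZMod N)³ → (ZMod N)^q`, `𝒟(x₁,x₂,x₃) = (δ₁(j)x₁ + δ₂(j)x₂ + δ₃(j)x₃)_{j=1,…,q}`;
in particular `Γ` is perfect if and only if `𝒟` is injective. -/
theorem statement5 (q : ℕ) (hq : IsPrimePow q)
    (δ : Fin 3 → Fin (q + 1) → ZMod (q ^ 2 + q + 1))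
    (hinj : ∀ i, Function.Injective (δ i))
    (h0 : ∀ i, δ i 0 = 0)
    (hpds : ∀ i, IsPlanarDifferenceSet q (Set.range (δ i))) :
    Nonempty (Additive (Abelianization (SingerLattice q δ)) ≃+ LinearMap.ker (diffMap q δ)) ∧
      (commutator (SingerLattice q δ) = ⊤ ↔ Function.Injective (diffMap q δ)) := by
  have hne : NeZero (q ^ 2 + q + 1) := ⟨by positivity⟩
  have hfin := finite_ab q δ
  have hN := enough (q ^ 2 + q + 1)
  have hE : HasEnoughRootsOfUnity (Multiplicative (ZMod (q ^ 2 + q + 1)))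
      (Monoid.exponent (Abelianization (SingerLattice q δ))) :=
    HasEnoughRootsOfUnity.of_dvd _ (Monoid.exponent_dvd_of_forall_pow_eq_one (pow_N q δ))
  obtain ⟨e⟩ := CommGroup.monoidHom_mulEquiv_of_hasEnoughRootsOfUnity
    (Abelianization (SingerLattice q δ)) (Multiplicative (ZMod (q ^ 2 + q + 1)))
  let E : Additive (Abelianization (SingerLattice q δ)) ≃+ LinearMap.ker (diffMap q δ) :=
    (MulEquiv.toAdditive e.symm).trans (AddEquiv.ofBijective (charMap q δ) (charMap_bij q δ h0))
  refine ⟨⟨E⟩, ?_⟩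
  rw [← LinearMap.ker_eq_bot, ← Submodule.subsingleton_iff_eq_bot, ← E.toEquiv.subsingleton_congr]
  exact QuotientGroup.subsingleton_iff.symm

end Stmt5
end
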